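/- arXiv:2409.06465 — 2 statements merged into one kernel-verified Lean document; each statement's English description precedes it below -/
import Mathlib

section
/- Let {X_n}_n be a sequence of Hermitian matrices with X_n of order d_n, d_n → ∞, and let f : Ω → ℂ^{s×s} be measurable on a measurable set Ω ⊆ ℝ^ℓ with 0 < m_ℓ(Ω) < ∞. For each n let P_n ∈ ℂ^{d_n×d_n'} be a compression matrix with d_n' < d_n and P_n* P_n = I_{d_n'}, and set Y_{d_n'} = P_n* X_n P_n. If lim_{n→∞} d_n'/d_n = 1, then {X_n}_n ∼_λ f if and only if {Y_{d_n'}}_n ∼_λ f. -/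
open MeasureTheory Filter Topology Matrix
open scoped Real

noncomputable section

/-- Sum of `F` over the eigenvalues (with multiplicity) of a square complex matrix,
the eigenvalues being the roots of the characteristic polynomial. -/
def eigSum {ι : Type*} [Fintype ι] [DecidableEq ι] (F : ℂ → ℂ) (A : Matrix ι ι ℂ) : ℂ :=
  (A.charpoly.roots.map F).sum

/-- Sum of `F` over the singular values `σ_1, …, σ_{min(#rows,#cols)}` of a rectangular
complex matrix: the singular values are the square roots of the eigenvalues of `A * Aᴴ`,
discarding the `#rows - min(#rows,#cols)` superfluous zero ones. -/
def svSum {m n : Type*} [Fintype m] [Fintype n] [DecidableEq m]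
    (F : ℝ → ℂ) (A : Matrix m n ℂ) : ℂ :=
  (∑ i, F (Real.sqrt ((Matrix.isHermitian_mul_conjTranspose_self A).eigenvalues i))) -
    ((Fintype.card m - min (Fintype.card m) (Fintype.card n) : ℕ) : ℂ) * F 0

/-- `{A_n}_n ∼_σ f` : the matrix-sequence `A` is distributed as the matrix-valued
symbol `f : Ω → ℂ^{ρ×τ}` in the sense of the singular values (Weyl sense). -/
def DistributedSV {Θ : Type*} [MeasureSpace Θ] (Ω : Set Θ)
    {ρ τ : Type*} [Fintype ρ] [Fintype τ] [DecidableEq ρ]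
    (f : Θ → Matrix ρ τ ℂ)
    {ι κ : ℕ → Type} [∀ n, Fintype (ι n)] [∀ n, Fintype (κ n)] [∀ n, DecidableEq (ι n)]
    (A : ∀ n, Matrix (ι n) (κ n) ℂ) : Prop :=
  ∀ F : ℝ → ℂ, Continuous F → HasCompactSupport F →
    Tendsto
      (fun n => ((min (Fintype.card (ι n)) (Fintype.card (κ n)) : ℕ) : ℂ)⁻¹ * svSum F (A n))
      atTop
      (𝓝 (((volume Ω).toReal : ℂ)⁻¹ *
        ∫ θ in Ω, ((min (Fintype.card ρ) (Fintype.card τ) : ℕ) : ℂ)⁻¹ * svSum F (f θ)))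

/-- `{A_n}_n ∼_λ f` : the matrix-sequence `A` is distributed as the matrix-valued
symbol `f : Ω → ℂ^{ρ×ρ}` in the sense of the eigenvalues (Weyl sense). -/
def DistributedEig {Θ : Type*} [MeasureSpace Θ] (Ω : Set Θ)
    {ρ : Type*} [Fintype ρ] [DecidableEq ρ]
    (f : Θ → Matrix ρ ρ ℂ)
    {ι : ℕ → Type} [∀ n, Fintype (ι n)] [∀ n, DecidableEq (ι n)]
    (A : ∀ n, Matrix (ι n) (ι n) ℂ) : Prop :=
  ∀ F : ℂ → ℂ, Continuous F → HasCompactSupport F →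
    Tendsto (fun n => ((Fintype.card (ι n) : ℕ) : ℂ)⁻¹ * eigSum F (A n)) atTop
      (𝓝 (((volume Ω).toReal : ℂ)⁻¹ *
        ∫ θ in Ω, ((Fintype.card ρ : ℕ) : ℂ)⁻¹ * eigSum F (f θ)))

/-- `{A_n}_n ∼_σ α I` (constant symbol `α I_s`, `α = 0` being the notion of a
zero-distributed matrix-sequence): the limit of the singular value averages is `F(α)`. -/
def DistributedSVConst (α : ℝ)
    {ι κ : ℕ → Type} [∀ n, Fintype (ι n)] [∀ n, Fintype (κ n)] [∀ n, DecidableEq (ι n)]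
    (A : ∀ n, Matrix (ι n) (κ n) ℂ) : Prop :=
  ∀ F : ℝ → ℂ, Continuous F → HasCompactSupport F →
    Tendsto
      (fun n => ((min (Fintype.card (ι n)) (Fintype.card (κ n)) : ℕ) : ℂ)⁻¹ * svSum F (A n))
      atTop (𝓝 (F α))

/-- `{A_n}_n ∼_λ α I` (constant symbol `α I_s`, `α` real): the limit of the eigenvalue
averages is `F(α)`. -/
def DistributedEigConst (α : ℝ)
    {ι : ℕ → Type} [∀ n, Fintype (ι n)] [∀ n, DecidableEq (ι n)]
    (A : ∀ n, Matrix (ι n) (ι n) ℂ) : Prop :=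
  ∀ F : ℂ → ℂ, Continuous F → HasCompactSupport F →
    Tendsto (fun n => ((Fintype.card (ι n) : ℕ) : ℂ)⁻¹ * eigSum F (A n)) atTop
      (𝓝 (F (α : ℂ)))

/-- The `k`-th Fourier coefficient (computed entrywise) of a matrix-valued function on
`[-π, π]`: `f̂_k = (1/2π) ∫_{-π}^{π} f(θ) e^{-ικθ} dθ`. -/
def fCoeff {ρ τ : Type*} (f : ℝ → Matrix ρ τ ℂ) (k : ℤ) : Matrix ρ τ ℂ :=
  Matrix.of fun a b =>
    ((2 * π : ℝ) : ℂ)⁻¹ *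
      ∫ θ in (-π : ℝ)..π, f θ a b * Complex.exp (-(Complex.I * (k : ℂ) * (θ : ℂ)))

/-- The (rectangular) block Toeplitz matrix `T_{n,n'}(f) = [f̂_{i-j}]`, of size
`sn × tn'` when `f` is `s × t` matrix-valued. -/
def blockToeplitz {ρ τ : Type*} (f : ℝ → Matrix ρ τ ℂ) (n n' : ℕ) :
    Matrix (Fin n × ρ) (Fin n' × τ) ℂ :=
  Matrix.of fun p q => fCoeff f (((p.1 : ℕ) : ℤ) - ((q.1 : ℕ) : ℤ)) p.2 q.2

/-- Dimension count: if vectors supported on `S` whose image vanishes on `R` are zero,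
then `S` has at most as many elements as `R`. -/
lemma xc_card_le {m n : Type*} [Fintype m] [Fintype n] [DecidableEq m] [DecidableEq n]
    (Q : Matrix n m ℂ) (S : Finset m) (R : Finset n)
    (h : ∀ c : m → ℂ, (∀ i, i ∉ S → c i = 0) → (∀ j ∈ R, (Q *ᵥ c) j = 0) → c = 0) :
    S.card ≤ R.card := by
  let Q' : Matrix R S ℂ := Matrix.of fun j i => Q j i
  have hinj : Function.Injective (Matrix.mulVecLin Q') := by
    rw [injective_iff_map_eq_zero]
    intro c hc
    have key := h (fun i => if hi : i ∈ S then c ⟨i, hi⟩ else 0)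
      (fun i hi => by simp [hi]) (fun j hj => by
        have h1 := congrFun hc ⟨j, hj⟩
        simp only [Matrix.mulVecLin_apply, Matrix.mulVec, dotProduct, Q', Matrix.of_apply,
          Pi.zero_apply] at h1
        simp only [Matrix.mulVec, dotProduct]
        refine Eq.trans ?_ h1
        rw [← Finset.sum_subset (Finset.subset_univ S)
          (fun i _ hi => by simp [hi]), ← Finset.sum_coe_sort S]
        refine Finset.sum_congr rfl fun i _ => ?_
        simp)
    ext i
    have := congrFun key i.1
    simpa using this
  have := LinearMap.finrank_le_finrank_of_injective hinj
  simpa using this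

/-- The quadratic form of a diagonal matrix. -/
lemma xc_diag_form {m : Type*} [Fintype m] [DecidableEq m] (b : m → ℝ) (c : m → ℂ) :
    star c ⬝ᵥ (Matrix.diagonal (fun i => (b i : ℂ)) *ᵥ c)
      = ((∑ i, b i * ‖c i‖ ^ 2 : ℝ) : ℂ) := by
  simp only [dotProduct, Matrix.mulVec_diagonal, Pi.star_apply]
  push_cast
  refine Finset.sum_congr rfl fun i _ => ?_
  rw [← Complex.conj_mul']
  simp only [RCLike.star_def]
  ring

/-- Transfer of diagonal quadratic forms. -/
lemma xc_form {m n : Type*} [Fintype m] [Fintype n] [DecidableEq m] [DecidableEq n]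
    (Q : Matrix n m ℂ) (a : n → ℝ) (b : m → ℝ)
    (hQ : Qᴴ * Matrix.diagonal (fun j => (a j : ℂ)) * Q = Matrix.diagonal (fun i => (b i : ℂ)))
    (c : m → ℂ) :
    ∑ i, b i * ‖c i‖ ^ 2 = ∑ j, a j * ‖(Q *ᵥ c) j‖ ^ 2 := by
  have h1 := xc_diag_form b c
  have h2 := xc_diag_form a (Q *ᵥ c)
  rw [← hQ, ← Matrix.mulVec_mulVec, ← Matrix.mulVec_mulVec, Matrix.dotProduct_mulVec,
    ← Matrix.star_mulVec] at h1
  rw [h1] at h2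
  exact_mod_cast h2

lemma xc_count {m n : Type*} [Fintype m] [Fintype n] [DecidableEq m] [DecidableEq n]
    (Q : Matrix n m ℂ) (hQ1 : Qᴴ * Q = 1) (a : n → ℝ) (b : m → ℝ)
    (hQ : Qᴴ * Matrix.diagonal (fun j => (a j : ℂ)) * Q = Matrix.diagonal (fun i => (b i : ℂ)))
    (t : ℝ) :
    (Finset.univ.filter fun i => b i ≤ t).card ≤ (Finset.univ.filter fun j => a j ≤ t).card ∧
    (Finset.univ.filter fun i => t < b i).card ≤ (Finset.univ.filter fun j => t < a j).card := by
  have hone : ∀ c : m → ℂ, ∑ i, ‖c i‖ ^ 2 = ∑ j, ‖(Q *ᵥ c) j‖ ^ 2 := by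
    intro c
    have := xc_form Q (fun _ => 1) (fun _ => 1) (by simpa using hQ1) c
    simpa using this
  have hform : ∀ c : m → ℂ, ∑ i, (b i - t) * ‖c i‖ ^ 2
      = ∑ j, (a j - t) * ‖(Q *ᵥ c) j‖ ^ 2 := by
    intro c
    simp only [sub_mul, Finset.sum_sub_distrib, ← Finset.mul_sum]
    rw [xc_form Q a b hQ c, hone c]
  have hzero : ∀ c : m → ℂ, ∑ i, ‖c i‖ ^ 2 = 0 → c = 0 := by
    intro c hc
    rw [Finset.sum_eq_zero_iff_of_nonneg (fun i _ => by positivity)] at hc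
    ext i
    simpa using hc i (Finset.mem_univ i)
  constructor
  · refine xc_card_le Q _ _ fun c h1 h2 => ?_
    simp only [Finset.mem_filter, Finset.mem_univ, true_and] at h1 h2
    have hnn : ∀ j, 0 ≤ (a j - t) * ‖(Q *ᵥ c) j‖ ^ 2 := by
      intro j
      by_cases hj : a j ≤ t
      · simp [h2 j hj]
      · exact mul_nonneg (by linarith) (by positivity)
    have hnp : ∑ i, (b i - t) * ‖c i‖ ^ 2 ≤ 0 := by
      refine Finset.sum_nonpos fun i _ => ?_
      by_cases hi : b i ≤ t
      · exact mul_nonpos_of_nonpos_of_nonneg (by linarith) (by positivity)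
      · simp [h1 i hi]
    rw [hform c] at hnp
    have h0 := le_antisymm hnp (Finset.sum_nonneg fun j _ => hnn j)
    rw [Finset.sum_eq_zero_iff_of_nonneg (fun j _ => hnn j)] at h0
    apply hzero
    rw [hone c]
    refine Finset.sum_eq_zero fun j hj => ?_
    by_cases hj' : a j ≤ t
    · simp [h2 j hj']
    · rcases mul_eq_zero.1 (h0 j hj) with h | h
      · linarith
      · exact h
  · refine xc_card_le Q _ _ fun c h1 h2 => ?_
    simp only [Finset.mem_filter, Finset.mem_univ, true_and] at h1 h2
    have hnn : ∀ i, 0 ≤ (b i - t) * ‖c i‖ ^ 2 := by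
      intro i
      by_cases hi : t < b i
      · exact mul_nonneg (by linarith) (by positivity)
      · simp [h1 i hi]
    have hnp : ∑ j, (a j - t) * ‖(Q *ᵥ c) j‖ ^ 2 ≤ 0 := by
      refine Finset.sum_nonpos fun j _ => ?_
      by_cases hj : t < a j
      · simp [h2 j hj]
      · exact mul_nonpos_of_nonpos_of_nonneg (by linarith) (by positivity)
    rw [← hform c] at hnp
    have h0 := le_antisymm hnp (Finset.sum_nonneg fun j _ => hnn j)
    rw [Finset.sum_eq_zero_iff_of_nonneg (fun j _ => hnn j)] at h0
    apply hzero
    refine Finset.sum_eq_zero fun i hi => ?_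
    by_cases hi' : t < b i
    · rcases mul_eq_zero.1 (h0 i hi) with h | h
      · linarith
      · exact h
    · simp [h1 i hi']

/-- Eigenvalue counting inequalities (Cauchy interlacing) for a compression. -/
lemma xc_count_eig {m n : Type*} [Fintype m] [Fintype n] [DecidableEq m] [DecidableEq n]
    (A : Matrix n n ℂ) (hA : A.IsHermitian) (P : Matrix n m ℂ) (hP : Pᴴ * P = 1)
    (hB : (Pᴴ * A * P).IsHermitian) (t : ℝ) :
    (Finset.univ.filter fun i => hB.eigenvalues i ≤ t).card
        ≤ (Finset.univ.filter fun j => hA.eigenvalues j ≤ t).card ∧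
    (Finset.univ.filter fun i => t < hB.eigenvalues i).card
        ≤ (Finset.univ.filter fun j => t < hA.eigenvalues j).card := by
  have hAs := hA.spectral_theorem
  have hBs := hB.conjStarAlgAut_star_eigenvectorUnitary
  rw [Unitary.conjStarAlgAut_apply] at hAs
  rw [Unitary.conjStarAlgAut_star_apply] at hBs
  set V : Matrix n n ℂ := (hA.eigenvectorUnitary : Matrix n n ℂ) with hV
  set U : Matrix m m ℂ := (hB.eigenvectorUnitary : Matrix m m ℂ) with hU
  have hVV : V * Vᴴ = 1 := Unitary.coe_mul_star_self hA.eigenvectorUnitary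
  have hUU : Uᴴ * U = 1 := Unitary.coe_star_mul_self hB.eigenvectorUnitary
  refine xc_count (Vᴴ * P * U) ?_ _ _ ?_ t
  · calc (Vᴴ * P * U)ᴴ * (Vᴴ * P * U) = Uᴴ * (Pᴴ * (V * Vᴴ) * P) * U := by
          simp only [Matrix.conjTranspose_mul, Matrix.conjTranspose_conjTranspose,
            Matrix.mul_assoc]
      _ = 1 := by rw [hVV, Matrix.mul_one, hP, Matrix.mul_one, hUU]
  · refine Eq.trans ?_ hBs
    calc _ = Uᴴ * (Pᴴ * (V * Matrix.diagonal (fun j => (hA.eigenvalues j : ℂ)) * Vᴴ) * P) * U := by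
          simp only [Matrix.conjTranspose_mul, Matrix.conjTranspose_conjTranspose,
            Matrix.mul_assoc]
      _ = Uᴴ * (Pᴴ * A * P) * U := by
          congr 4
          exact hAs.symm
      _ = _ := rfl

lemma xc_eigSum {n : Type*} [Fintype n] [DecidableEq n] (F : ℂ → ℂ)
    (A : Matrix n n ℂ) (hA : A.IsHermitian) :
    eigSum F A = ∑ i, F (hA.eigenvalues i : ℂ) := by
  unfold eigSum
  rw [hA.roots_charpoly_eq_eigenvalues, Multiset.map_map]
  rfl

/-- Fibre counting: sums of step functions. -/
lemma xc_step_sum {m : Type*} [Fintype m] (δ : ℝ) (F : ℝ → ℂ) (N : ℕ)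
    (hN : ∀ k : ℤ, k ∉ Finset.Icc (-N : ℤ) N → F (k * δ) = 0) (b : m → ℝ) :
    ∑ i, F ((⌈b i / δ⌉ : ℤ) * δ) = ∑ k ∈ Finset.Icc (-N : ℤ) N,
      F (k * δ) * ((Finset.univ.filter fun i => ⌈b i / δ⌉ = k).card : ℂ) := by
  have h1 : ∀ i, F ((⌈b i / δ⌉ : ℤ) * δ) = ∑ k ∈ Finset.Icc (-N : ℤ) N,
      if ⌈b i / δ⌉ = k then F (k * δ) else 0 := by
    intro i
    rw [Finset.sum_ite_eq]
    split_ifs with h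
    · rfl
    · exact hN _ h
  rw [Finset.sum_congr rfl fun i _ => h1 i, Finset.sum_comm]
  refine Finset.sum_congr rfl fun k _ => ?_
  rw [← Finset.sum_filter, Finset.sum_const, nsmul_eq_mul, mul_comm]

lemma xc_fibre {m : Type*} [Fintype m] (δ : ℝ) (hδ : 0 < δ) (b : m → ℝ) (k : ℤ) :
    (Finset.univ.filter fun i => ⌈b i / δ⌉ = k).card
      + (Finset.univ.filter fun i => b i ≤ ((k - 1 : ℤ) : ℝ) * δ).card
    = (Finset.univ.filter fun i => b i ≤ (k : ℝ) * δ).card := by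
  classical
  have h : ∀ (x : ℝ) (j : ℤ), x ≤ (j : ℝ) * δ ↔ ⌈x / δ⌉ ≤ j := by
    intro x j
    rw [Int.ceil_le, div_le_iff₀ hδ]
  simp only [h]
  rw [← Finset.card_union_of_disjoint, ← Finset.filter_or]
  · congr 1
    ext i
    simp only [Finset.mem_filter, Finset.mem_univ, true_and]
    omega
  · rw [Finset.disjoint_filter]
    intro i _ h1 h2
    omega

/-- Uniform comparison of eigenvalue sums. -/
lemma xc_compare (F : ℝ → ℂ) (hF : Continuous F) (hFc : HasCompactSupport F)
    (ε : ℝ) (hε : 0 < ε) :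
    ∃ C : ℝ, 0 ≤ C ∧ ∀ (d d' : ℕ) (a : Fin d → ℝ) (b : Fin d' → ℝ),
      d' ≤ d →
      (∀ t, (Finset.univ.filter fun i => b i ≤ t).card
          ≤ (Finset.univ.filter fun j => a j ≤ t).card ∧
        (Finset.univ.filter fun i => t < b i).card
          ≤ (Finset.univ.filter fun j => t < a j).card) →
      ‖∑ j, F (a j) - ∑ i, F (b i)‖ ≤ ε * (d + d') + C * ((d : ℝ) - d') := by
  obtain ⟨δ, hδ, hδF⟩ := Metric.uniformContinuous_iff.1
    (hFc.uniformContinuous_of_continuous hF) ε hε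
  set η := δ / 2 with hη
  have hηp : 0 < η := by positivity
  obtain ⟨R, hR⟩ := hFc.isCompact.isBounded.exists_norm_le
  obtain ⟨N, hN⟩ := exists_nat_gt (R / η)
  have hNz : ∀ k : ℤ, k ∉ Finset.Icc (-N : ℤ) N → F (k * η) = 0 := by
    intro k hk
    by_contra hne
    have h1 := hR _ (subset_tsupport F hne)
    rw [div_lt_iff₀ hηp] at hN
    have h2 : |(k : ℝ)| * η < N * η := by
      rw [Real.norm_eq_abs, abs_mul, abs_of_pos hηp] at h1
      linarith
    have h3 : |(k : ℝ)| < N := lt_of_mul_lt_mul_right h2 hηp.le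
    have h4 : |k| < (N : ℤ) := by exact_mod_cast h3
    rw [abs_lt] at h4
    exact hk (Finset.mem_Icc.2 ⟨h4.1.le, h4.2.le⟩)
  have happ : ∀ x : ℝ, ‖F x - F ((⌈x / η⌉ : ℤ) * η)‖ ≤ ε := by
    intro x
    rw [← dist_eq_norm]
    refine (hδF ?_).le
    have h1 : x / η ≤ ⌈x / η⌉ := Int.le_ceil _
    have h2 : (⌈x / η⌉ : ℝ) < x / η + 1 := Int.ceil_lt_add_one _
    rw [div_le_iff₀ hηp] at h1
    have h3 : (⌈x / η⌉ : ℝ) * η < x + η := by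
      have := mul_lt_mul_of_pos_right h2 hηp
      rwa [add_mul, div_mul_cancel₀ _ hηp.ne', one_mul] at this
    rw [Real.dist_eq, abs_lt]
    constructor <;> linarith
  have hsum : ∀ (p : ℕ) (x : Fin p → ℝ),
      ‖∑ j, F (x j) - ∑ j, F ((⌈x j / η⌉ : ℤ) * η)‖ ≤ ε * p := by
    intro p x
    rw [← Finset.sum_sub_distrib]
    refine (norm_sum_le_of_le _ fun j _ => happ (x j)).trans ?_
    simp [mul_comm]
  refine ⟨∑ k ∈ Finset.Icc (-N : ℤ) N, ‖F (k * η)‖, Finset.sum_nonneg fun _ _ => norm_nonneg _, ?_⟩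
  intro d d' a b hdd hcount
  have hstep : ‖∑ j, F ((⌈a j / η⌉ : ℤ) * η) - ∑ i, F ((⌈b i / η⌉ : ℤ) * η)‖
      ≤ (∑ k ∈ Finset.Icc (-N : ℤ) N, ‖F (k * η)‖) * ((d : ℝ) - d') := by
    rw [xc_step_sum η F N hNz a, xc_step_sum η F N hNz b, ← Finset.sum_sub_distrib,
      Finset.sum_mul]
    refine norm_sum_le_of_le _ fun k _ => ?_
    rw [← mul_sub, norm_mul]
    refine mul_le_mul_of_nonneg_left ?_ (norm_nonneg _)
    have ha := xc_fibre η hηp a k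
    have hb := xc_fibre η hηp b k
    have hc1 := hcount ((k : ℝ) * η)
    have hc2 := hcount (((k - 1 : ℤ) : ℝ) * η)
    have hcomp : ∀ (p : ℕ) (x : Fin p → ℝ) (t : ℝ),
        (Finset.univ.filter fun i => x i ≤ t).card
          + (Finset.univ.filter fun i => t < x i).card = p := by
      intro p x t
      have := Finset.card_filter_add_card_filter_not (s := (Finset.univ : Finset (Fin p)))
        (fun i => x i ≤ t)
      simpa using this
    have e1 := hcomp d a ((k : ℝ) * η)
    have e2 := hcomp d a (((k - 1 : ℤ) : ℝ) * η)
    have e3 := hcomp d' b ((k : ℝ) * η)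
    have e4 := hcomp d' b (((k - 1 : ℤ) : ℝ) * η)
    generalize (Finset.univ.filter fun i => ⌈a i / η⌉ = k).card = u at *
    generalize (Finset.univ.filter fun i => ⌈b i / η⌉ = k).card = v at *
    have h1 : u ≤ v + (d - d') := by omega
    have h2 : v ≤ u + (d - d') := by omega
    have h1' : (u : ℝ) ≤ v + ((d : ℝ) - d') := by
      rw [← Nat.cast_sub hdd]; exact_mod_cast h1
    have h2' : (v : ℝ) ≤ u + ((d : ℝ) - d') := by
      rw [← Nat.cast_sub hdd]; exact_mod_cast h2
    have : ((u : ℂ) - v) = (((u : ℝ) - v : ℝ) : ℂ) := by push_cast; rfl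
    rw [this, Complex.norm_real, Real.norm_eq_abs, abs_le]
    constructor <;> linarith
  have hA := hsum d a
  have hB := hsum d' b
  rw [norm_sub_rev] at hB
  calc _ = ‖(∑ j, F (a j) - ∑ j, F ((⌈a j / η⌉ : ℤ) * η))
        + (∑ j, F ((⌈a j / η⌉ : ℤ) * η) - ∑ i, F ((⌈b i / η⌉ : ℤ) * η))
        + (∑ i, F ((⌈b i / η⌉ : ℤ) * η) - ∑ i, F (b i))‖ := by congr 1; ring
    _ ≤ _ := norm_add₃_le
    _ ≤ _ := by linarith

/-- The averages of the two sequences have vanishing difference. -/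
lemma xc_diff (F : ℝ → ℂ) (hF : Continuous F) (hFc : HasCompactSupport F)
    (d d' : ℕ → ℕ) (hlt : ∀ n, d' n < d n)
    (hratio : Tendsto (fun n => (d' n : ℝ) / (d n : ℝ)) atTop (𝓝 1))
    (a : ∀ n, Fin (d n) → ℝ) (b : ∀ n, Fin (d' n) → ℝ)
    (hcount : ∀ n t, (Finset.univ.filter fun i => b n i ≤ t).card
          ≤ (Finset.univ.filter fun j => a n j ≤ t).card ∧
        (Finset.univ.filter fun i => t < b n i).card
          ≤ (Finset.univ.filter fun j => t < a n j).card) :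
    Tendsto (fun n => (d n : ℂ)⁻¹ * ∑ j, F (a n j) - (d' n : ℂ)⁻¹ * ∑ i, F (b n i))
      atTop (𝓝 0) := by
  obtain ⟨M, hM⟩ := hF.bounded_above_of_compact_support hFc
  have hM0 : 0 ≤ M := (norm_nonneg _).trans (hM 0)
  rw [tendsto_zero_iff_norm_tendsto_zero, Metric.tendsto_nhds]
  intro ε hε
  obtain ⟨C, hC, hcmp⟩ := xc_compare F hF hFc (ε / 4) (by positivity)
  have hz : Tendsto (fun n => (C + M) * (1 - (d' n : ℝ) / (d n : ℝ))) atTop (𝓝 0) := by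
    have := (tendsto_const_nhds (x := (1 : ℝ))).sub hratio |>.const_mul (C + M)
    simpa using this
  filter_upwards [hz.eventually (gt_mem_nhds (show (0 : ℝ) < ε / 2 by positivity))] with n hn
  rw [dist_zero_right, norm_norm]
  have hdpos : (0 : ℝ) < d n := by exact_mod_cast (Nat.zero_le _).trans_lt (hlt n)
  have hdd : (d' n : ℝ) < d n := by exact_mod_cast hlt n
  have hd'0 : (0 : ℝ) ≤ d' n := Nat.cast_nonneg _
  have hSB : ‖∑ i, F (b n i)‖ ≤ M * d' n := by
    refine (norm_sum_le_of_le _ fun j _ => hM (b n j)).trans ?_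
    simp [mul_comm]
  have h1 := hcmp (d n) (d' n) (a n) (b n) (hlt n).le (hcount n)
  have h2 : ‖((d n : ℂ)⁻¹ - (d' n : ℂ)⁻¹) * ∑ i, F (b n i)‖ ≤ M * (1 - (d' n : ℝ) / d n) := by
    rcases Nat.eq_zero_or_pos (d' n) with h0 | h0
    · have : ‖∑ i, F (b n i)‖ = 0 := by
        refine le_antisymm ?_ (norm_nonneg _)
        simpa [h0] using hSB
      rw [norm_mul, this]
      simp [h0, hM0]
    · have h0' : (0 : ℝ) < d' n := by exact_mod_cast h0
      have e : ((d n : ℂ)⁻¹ - (d' n : ℂ)⁻¹) = (((d n : ℝ)⁻¹ - (d' n : ℝ)⁻¹ : ℝ) : ℂ) := by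
        push_cast; rfl
      have hle : (d n : ℝ)⁻¹ ≤ (d' n : ℝ)⁻¹ := inv_anti₀ h0' hdd.le
      rw [norm_mul, e, Complex.norm_real, Real.norm_eq_abs, abs_of_nonpos (by linarith)]
      calc _ ≤ -((d n : ℝ)⁻¹ - (d' n : ℝ)⁻¹) * (M * d' n) :=
            mul_le_mul_of_nonneg_left hSB (by linarith)
        _ = _ := by field_simp; ring
  have h3 : ‖(d n : ℂ)⁻¹ * (∑ j, F (a n j) - ∑ i, F (b n i))‖
      ≤ ε / 2 + C * (1 - (d' n : ℝ) / d n) := by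
    rw [norm_mul, norm_inv, Complex.norm_natCast]
    calc _ ≤ (d n : ℝ)⁻¹ * (ε / 4 * (d n + d' n) + C * ((d n : ℝ) - d' n)) :=
          mul_le_mul_of_nonneg_left h1 (by positivity)
      _ ≤ (d n : ℝ)⁻¹ * (ε / 4 * (d n + d n) + C * ((d n : ℝ) - d' n)) := by gcongr
      _ = _ := by field_simp; ring
  calc _ = ‖(d n : ℂ)⁻¹ * (∑ j, F (a n j) - ∑ i, F (b n i))
        + ((d n : ℂ)⁻¹ - (d' n : ℂ)⁻¹) * ∑ i, F (b n i)‖ := by congr 1; ring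
    _ ≤ _ := norm_add_le _ _
    _ < ε := by linarith

/-- extradimensional compression, eigenvalue version:
if `X_n` is Hermitian of order `d_n → ∞`, `P_n` is a `d_n × d_n'` compression matrix
(`d_n' < d_n`, `P_n* P_n = I`), `Y_n = P_n* X_n P_n` and `d_n'/d_n → 1`, then
`{X_n}_n ∼_λ f` iff `{Y_n}_n ∼_λ f`. -/
theorem extradim_compression_eig
    (l s : ℕ) (Ω : Set (Fin l → ℝ)) (hΩmeas : MeasurableSet Ω)
    (hΩpos : 0 < volume Ω) (hΩfin : volume Ω < ⊤)
    (f : (Fin l → ℝ) → Matrix (Fin s) (Fin s) ℂ)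
    (hf : ∀ i j, Measurable fun θ => f θ i j)
    (d d' : ℕ → ℕ)
    (hd : Tendsto d atTop atTop)
    (hlt : ∀ n, d' n < d n)
    (X : ∀ n, Matrix (Fin (d n)) (Fin (d n)) ℂ)
    (hX : ∀ n, (X n).IsHermitian)
    (P : ∀ n, Matrix (Fin (d n)) (Fin (d' n)) ℂ)
    (hP : ∀ n, (P n)ᴴ * P n = 1)
    (hratio : Tendsto (fun n => (d' n : ℝ) / (d n : ℝ)) atTop (𝓝 1)) :
    DistributedEig Ω f X ↔ DistributedEig Ω f (fun n => (P n)ᴴ * X n * P n) := by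
  have hY : ∀ n, ((P n)ᴴ * X n * P n).IsHermitian := fun n =>
    Matrix.isHermitian_conjTranspose_mul_mul (P n) (hX n)
  have key : ∀ F : ℂ → ℂ, Continuous F → HasCompactSupport F →
      Tendsto (fun n => ((Fintype.card (Fin (d n)) : ℕ) : ℂ)⁻¹ * eigSum F (X n)
        - ((Fintype.card (Fin (d' n)) : ℕ) : ℂ)⁻¹ * eigSum F ((P n)ᴴ * X n * P n))
        atTop (𝓝 0) := by
    intro F hF hFc
    have := xc_diff (fun x : ℝ => F (x : ℂ)) (hF.comp Complex.continuous_ofReal)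
      (hFc.comp_isClosedEmbedding Complex.isometry_ofReal.isClosedEmbedding)
      d d' hlt hratio (fun n => (hX n).eigenvalues) (fun n => (hY n).eigenvalues)
      (fun n t => xc_count_eig (X n) (hX n) (P n) (hP n) (hY n) t)
    refine this.congr fun n => ?_
    rw [xc_eigSum F _ (hX n), xc_eigSum F _ (hY n), Fintype.card_fin, Fintype.card_fin]
  constructor
  · intro h F hF hFc
    have := (h F hF hFc).sub (key F hF hFc)
    rw [sub_zero] at this
    refine this.congr fun n => ?_
    ring
  · intro h F hF hFc
    have := (h F hF hFc).add (key F hF hFc)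
    rw [add_zero] at this
    refine this.congr fun n => ?_
    ring

end
end

section
/- Let f : [-π,π] → ℂ^{s×t} belong to L¹([-π,π]; ℂ^{s×t}). Then the sequence of block Toeplitz matrices {T_n(f)}_n satisfies {T_n(f)}_n ∼_σ f. -/
open MeasureTheory Filter Topology Matrix
open scoped Real

noncomputable section

/-- Lebesgue measure on `(-π, π]`. -/
abbrev muT : Measure ℝ := volume.restrict (Set.Ioc (-π) π)

/-- The exponential monomial. -/
def eM (m : ℤ) : ℝ → ℂ := fun θ => Complex.exp (Complex.I * (m : ℂ) * (θ : ℂ))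

lemma eM_norm (m : ℤ) (θ : ℝ) : ‖eM m θ‖ = 1 := by
  have : Complex.I * (m : ℂ) * (θ : ℂ) = ((m * θ : ℝ) : ℂ) * Complex.I := by push_cast; ring
  rw [eM, this, Complex.norm_exp_ofReal_mul_I]

lemma eM_cont (m : ℤ) : Continuous (eM m) := by unfold eM; fun_prop

lemma eM_add (m k : ℤ) (θ : ℝ) : eM (m + k) θ = eM m θ * eM k θ := by
  simp only [eM, ← Complex.exp_add]; congr 1; push_cast; ring

lemma eM_zero (θ : ℝ) : eM 0 θ = 1 := by simp [eM]

lemma eM_conj (m : ℤ) (θ : ℝ) : star (eM m θ) = eM (-m) θ := by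
  simp only [eM, Complex.star_def, ← Complex.exp_conj]; congr 1; simp

lemma trig_dense (f : ℝ → ℂ) (hf : Integrable f muT) (ε : ℝ) (hε : 0 < ε) :
    ∃ p ∈ Submodule.span ℂ (Set.range eM), (∫ θ, ‖f θ - p θ‖ ∂muT) ≤ ε := by
  have h2 : (0 : ℝ) < 2 * π := by positivity
  have : Fact ((0 : ℝ) < 2 * π) := ⟨h2⟩
  have hend : -π + 2 * π = π := by ring
  have hmp := AddCircle.measurePreserving_mk (2 * π) (-π)
  rw [hend] at hmp
  set F : AddCircle (2 * π) → ℂ := AddCircle.liftIoc (2 * π) (-π) f with hF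
  have hFm : MemLp F 1 := by
    apply MemLp.memLp_liftIoc
    rw [hend]
    exact memLp_one_iff_integrable.2 hf
  have hFint : Integrable F := memLp_one_iff_integrable.1 hFm
  obtain ⟨h, hh, hhm⟩ := hFint.exists_boundedContinuous_integral_sub_le (half_pos hε)
  have hd := span_fourier_closure_eq_top (T := 2 * π)
  have hmem : h.toContinuousMap ∈
      (Submodule.span ℂ (Set.range <| @fourier (2 * π))).topologicalClosure := by
    rw [hd]; trivial
  rw [← SetLike.mem_coe, Submodule.topologicalClosure_coe, Metric.mem_closure_iff] at hmem
  obtain ⟨q, hq, hqd⟩ := hmem (ε / (4 * π)) (by positivity)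
  refine ⟨fun θ => q (θ : AddCircle (2 * π)), ?_, ?_⟩
  · clear hqd
    refine Submodule.span_induction (p := fun q _ => (fun θ : ℝ => q (θ : AddCircle (2 * π))) ∈
      Submodule.span ℂ (Set.range eM)) ?_ ?_ ?_ ?_ hq
    · rintro _ ⟨m, rfl⟩
      refine Submodule.subset_span ⟨m, ?_⟩
      funext θ
      rw [fourier_coe_apply, eM]
      congr 1
      have : (π : ℂ) ≠ 0 := by exact_mod_cast Real.pi_ne_zero
      push_cast
      field_simp
    · exact Submodule.zero_mem _
    · intro x y _ _ hx hy
      exact Submodule.add_mem _ hx hy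
    · intro a x _ hx
      exact Submodule.smul_mem _ a hx
  · have e1 : (∫ θ, ‖f θ - q (θ : AddCircle (2 * π))‖ ∂muT) =
        ∫ θ, (fun x => ‖F x - q x‖) (θ : AddCircle (2 * π)) ∂muT := by
      refine setIntegral_congr_fun measurableSet_Ioc fun θ hθ => ?_
      have : F (θ : AddCircle (2 * π)) = f θ := by
        rw [hF, AddCircle.liftIoc_coe_apply]
        rw [hend]; exact hθ
      simp only [this]
    have hhi : Integrable (fun x => h x) (volume : Measure (AddCircle (2 * π))) := hhm
    have hqi : Integrable (fun x => q x) (volume : Measure (AddCircle (2 * π))) :=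
      q.continuous.integrable_of_hasCompactSupport (HasCompactSupport.of_compactSpace _)
    have e2 := AddCircle.integral_preimage (2 * π) (-π) (fun x => ‖F x - q x‖)
    rw [hend] at e2
    rw [e1, e2]
    calc (∫ x, ‖F x - q x‖) ≤ ∫ x, (‖F x - h x‖ + ‖h x - q x‖) := by
          refine integral_mono (hFint.sub hqi).norm
            ((hFint.sub hhi).norm.add (hhi.sub hqi).norm) fun x => ?_
          exact norm_sub_le_norm_sub_add_norm_sub _ _ _
      _ = (∫ x, ‖F x - h x‖) + ∫ x, ‖h x - q x‖ :=
          integral_add (hFint.sub hhi).norm (hhi.sub hqi).norm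
      _ ≤ ε / 2 + ∫ x : AddCircle (2 * π), ε / (4 * π) := by
          refine add_le_add hh (integral_mono (hhi.sub hqi).norm (integrable_const _) fun x => ?_)
          have := ContinuousMap.dist_apply_le_dist (f := h.toContinuousMap) (g := q) x
          rw [dist_eq_norm] at this
          exact this.trans hqd.le
      _ = ε := by
          simp [Measure.real]
          have := Real.pi_ne_zero
          rw [ENNReal.toReal_ofReal Real.pi_pos.le]
          field_simp
          ring

section part2
open scoped Matrix.Norms.L2Operator

section generic
variable {m n : Type*} [Fintype m] [Fintype n] [DecidableEq m] [DecidableEq n]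

set_option linter.unusedSectionVars false

lemma bilin_le (A : Matrix m n ℂ) (x : EuclideanSpace ℂ n) (y : EuclideanSpace ℂ m) :
    ‖∑ i, ∑ j, star (y i) * A i j * x j‖ ≤ ‖A‖ * ‖x‖ * ‖y‖ := by
  have h1 : ∑ i, ∑ j, star (y i) * A i j * x j =
      inner ℂ y (WithLp.toLp 2 (A *ᵥ x.ofLp) : EuclideanSpace ℂ m) := by
    simp only [PiLp.inner_apply, RCLike.inner_apply, Matrix.mulVec, dotProduct]
    refine Finset.sum_congr rfl fun i _ => ?_
    rw [Finset.sum_mul]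
    refine Finset.sum_congr rfl fun j _ => ?_
    simp only [Complex.star_def]; ring
  rw [h1]
  refine (norm_inner_le_norm _ _).trans ?_
  rw [mul_comm]
  exact mul_le_mul_of_nonneg_right (Matrix.l2_opNorm_mulVec A x) (norm_nonneg _)

lemma opnorm_le_of_bilin (A : Matrix m n ℂ) (C : ℝ) (hC : 0 ≤ C)
    (h : ∀ (x : EuclideanSpace ℂ n) (y : EuclideanSpace ℂ m),
      ‖∑ i, ∑ j, star (y i) * A i j * x j‖ ≤ C * ((‖x‖ ^ 2 + ‖y‖ ^ 2) / 2)) : ‖A‖ ≤ C := by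
  rw [Matrix.l2_opNorm_def]
  refine ContinuousLinearMap.opNorm_le_bound _ hC fun x => ?_
  set z : EuclideanSpace ℂ m := WithLp.toLp 2 (A *ᵥ x.ofLp) with hz
  change ‖z‖ ≤ C * ‖x‖
  by_cases hz0 : ‖z‖ = 0
  · rw [hz0]; positivity
  have hzp : 0 < ‖z‖ := lt_of_le_of_ne (norm_nonneg _) (Ne.symm hz0)
  have h2 := h x (((‖x‖ / ‖z‖ : ℝ) : ℂ) • z)
  have hyn : ‖((‖x‖ / ‖z‖ : ℝ) : ℂ) • z‖ = ‖x‖ := by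
    rw [norm_smul, Complex.norm_real, Real.norm_of_nonneg (by positivity)]
    field_simp
  have h1 : ∑ i, ∑ j, star ((((‖x‖ / ‖z‖ : ℝ) : ℂ) • z) i) * A i j * x j =
      inner ℂ (((‖x‖ / ‖z‖ : ℝ) : ℂ) • z) z := by
    simp only [PiLp.inner_apply, RCLike.inner_apply, Matrix.mulVec, dotProduct, hz]
    refine Finset.sum_congr rfl fun i _ => ?_
    rw [Finset.sum_mul]
    refine Finset.sum_congr rfl fun j _ => ?_
    simp only [Complex.star_def]; ring
  rw [h1, hyn, inner_smul_left, inner_self_eq_norm_sq_to_K] at h2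
  have h3 : ‖(starRingEnd ℂ) ((‖x‖ / ‖z‖ : ℝ) : ℂ) * ((‖z‖ : ℝ) : ℂ) ^ 2‖ = ‖x‖ * ‖z‖ := by
    rw [Complex.conj_ofReal, norm_mul, norm_pow, Complex.norm_real, Complex.norm_real, norm_norm,
      Real.norm_of_nonneg (by positivity)]
    field_simp
  have h4 : ‖x‖ * ‖z‖ ≤ C * ((‖x‖ ^ 2 + ‖x‖ ^ 2) / 2) := by
    rw [← h3]; exact h2
  by_cases hx : ‖x‖ = 0
  · have : x = 0 := norm_eq_zero.1 hx
    subst this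
    simp [hz] at hzp
  · have hxp : 0 < ‖x‖ := lt_of_le_of_ne (norm_nonneg _) (Ne.symm hx)
    have : ‖x‖ * ‖z‖ ≤ ‖x‖ * (C * ‖x‖) := by nlinarith
    exact le_of_mul_le_mul_left this hxp

lemma entry_le (A : Matrix m n ℂ) (i : m) (j : n) : ‖A i j‖ ≤ ‖A‖ := by
  have := bilin_le A (EuclideanSpace.single j 1) (EuclideanSpace.single i 1)
  simpa [Finset.sum_ite_eq, Pi.single_apply] using this

end generic

/-- scalar Fourier coefficient -/
def sC (f : ℝ → ℂ) (k : ℤ) : ℂ := ((2 * π : ℝ) : ℂ)⁻¹ * ∫ θ, f θ * eM (-k) θ ∂muT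

/-- scalar Toeplitz matrix -/
def sT (f : ℝ → ℂ) (n : ℕ) : Matrix (Fin n) (Fin n) ℂ :=
  Matrix.of fun i j => sC f (((i : ℕ) : ℤ) - ((j : ℕ) : ℤ))

lemma int_mul_eM {f : ℝ → ℂ} (hf : Integrable f muT) (k : ℤ) :
    Integrable (fun θ => f θ * eM k θ) muT :=
  hf.mul_bdd (c := 1) (eM_cont k).aestronglyMeasurable
    (Filter.Eventually.of_forall fun θ => (eM_norm k θ).le)

lemma sC_add {f g : ℝ → ℂ} (hf : Integrable f muT) (hg : Integrable g muT) (k : ℤ) :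
    sC (fun θ => f θ + g θ) k = sC f k + sC g k := by
  simp only [sC, add_mul]
  rw [integral_add (int_mul_eM hf _) (int_mul_eM hg _), mul_add]

lemma sC_smul (a : ℂ) (f : ℝ → ℂ) (k : ℤ) :
    sC (fun θ => a * f θ) k = a * sC f k := by
  simp only [sC, mul_assoc]
  rw [integral_const_mul]; ring

lemma sT_add {f g : ℝ → ℂ} (hf : Integrable f muT) (hg : Integrable g muT) (n : ℕ) :
    sT (fun θ => f θ + g θ) n = sT f n + sT g n := by
  ext i j; simp [sT, sC_add hf hg]

lemma sT_smul (a : ℂ) (f : ℝ → ℂ) (n : ℕ) :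
    sT (fun θ => a * f θ) n = a • sT f n := by
  ext i j; simp [sT, sC_smul]

lemma sT_sub {f g : ℝ → ℂ} (hf : Integrable f muT) (hg : Integrable g muT) (n : ℕ) :
    sT (fun θ => f θ - g θ) n = sT f n - sT g n := by
  have := sT_add hf (hg.const_mul (-1)) n
  rw [sT_smul] at this
  simp only [neg_mul, one_mul, ← sub_eq_add_neg] at this
  rw [this]; simp [sub_eq_add_neg]

lemma sum_sC {f : ℝ → ℂ} (hf : Integrable f muT) (n : ℕ) (W : Fin n → Fin n → ℂ) :
    ∑ i, ∑ j, sT f n i j * W i j = ((2 * π : ℝ) : ℂ)⁻¹ *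
      ∫ θ, f θ * (∑ i : Fin n, ∑ j : Fin n, star (eM (i : ℕ) θ) * W i j * eM (j : ℕ) θ) ∂muT := by
  have h1 : ∀ θ, f θ * (∑ i : Fin n, ∑ j : Fin n, star (eM (i : ℕ) θ) * W i j * eM (j : ℕ) θ) =
      ∑ i : Fin n, ∑ j : Fin n, (f θ * eM (-(((i : ℕ) : ℤ) - ((j : ℕ) : ℤ))) θ) * W i j := by
    intro θ
    rw [Finset.mul_sum]
    refine Finset.sum_congr rfl fun i _ => ?_
    rw [Finset.mul_sum]
    refine Finset.sum_congr rfl fun j _ => ?_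
    rw [eM_conj, show -(((i : ℕ) : ℤ) - ((j : ℕ) : ℤ)) = -((i : ℕ) : ℤ) + ((j : ℕ) : ℤ) by ring,
      eM_add]
    ring
  simp_rw [h1]
  rw [integral_finsetSum _ fun i _ => integrable_finsetSum _ fun j _ =>
    (int_mul_eM hf _).mul_const _, Finset.mul_sum]
  refine Finset.sum_congr rfl fun i _ => ?_
  rw [integral_finsetSum _ fun j _ => (int_mul_eM hf _).mul_const _, Finset.mul_sum]
  refine Finset.sum_congr rfl fun j _ => ?_
  rw [integral_mul_const]
  simp [sT, sC]; ring

lemma integral_eM (k : ℤ) : ∫ θ, eM k θ ∂muT = if k = 0 then ((2 * π : ℝ) : ℂ) else 0 := by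
  have hle : -π ≤ π := by linarith [Real.pi_pos]
  rw [← intervalIntegral.integral_of_le hle]
  split_ifs with h
  · subst h
    simp [eM_zero]; ring
  · have hk : Complex.I * (k : ℂ) ≠ 0 := by simp [h]
    simp only [eM]
    rw [integral_exp_mul_complex hk]
    have : Complex.exp (Complex.I * k * (π : ℝ)) = Complex.exp (Complex.I * k * (-π : ℝ)) := by
      rw [Complex.exp_eq_exp_iff_exists_int]
      exact ⟨k, by push_cast; ring⟩
    rw [this]; simp

lemma sC_eM_zero (g : ℝ → ℂ) (m k : ℤ) : sC (fun θ => eM m θ * g θ) k = sC g (k - m) := by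
  simp only [sC]
  congr 2; funext θ
  rw [show -(k - m) = m + (-k) by ring, eM_add]; ring

lemma sC_eM (m k : ℤ) : sC (eM m) k = if k = m then 1 else 0 := by
  have : ((2 * π : ℝ) : ℂ) ≠ 0 := by exact_mod_cast (by positivity : (2 * π : ℝ) ≠ 0)
  simp only [sC, ← eM_add, integral_eM]
  by_cases h : k = m
  · subst h; simp only [add_neg_cancel, if_true]; field_simp
  · have : m + -k ≠ 0 := fun h' => h (by linarith)
    simp [h, this]

lemma parseval (n : ℕ) (x : EuclideanSpace ℂ (Fin n)) :
    Integrable (fun θ => ‖∑ j : Fin n, x j * eM (j : ℕ) θ‖ ^ 2) muT ∧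
    ∫ θ, ‖∑ j : Fin n, x j * eM (j : ℕ) θ‖ ^ 2 ∂muT = 2 * π * ‖x‖ ^ 2 := by
  have hcont : Continuous (fun θ => ‖∑ j : Fin n, x j * eM (j : ℕ) θ‖ ^ 2) := by
    refine (Continuous.norm ?_).pow 2
    exact continuous_finsetSum _ fun j _ => continuous_const.mul (eM_cont _)
  have hc1 : Integrable (fun _ : ℝ => (1 : ℂ)) muT := integrable_const _
  refine ⟨?_, ?_⟩
  · exact (hcont.integrableOn_Icc (a := -π) (b := π)).mono_set Set.Ioc_subset_Icc_self
  · have key := sum_sC hc1 n (fun i j => star (x i) * x j)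
    have h1 : ∀ θ, (1 : ℂ) * (∑ i : Fin n, ∑ j : Fin n, star (eM (i : ℕ) θ) * (star (x i) * x j) * eM (j : ℕ) θ) =
        ((‖∑ j : Fin n, x j * eM (j : ℕ) θ‖ ^ 2 : ℝ) : ℂ) := by
      intro θ
      rw [one_mul, Complex.ofReal_pow, ← Complex.conj_mul', map_sum, Finset.sum_mul_sum]
      refine Finset.sum_congr rfl fun i _ => Finset.sum_congr rfl fun j _ => ?_
      simp only [map_mul, Complex.star_def]; ring
    simp_rw [h1] at key
    rw [integral_complex_ofReal] at key
    have h2 : ∑ i, ∑ j, sT (fun _ => (1 : ℂ)) n i j * (star (x i) * x j) =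
        ((‖x‖ ^ 2 : ℝ) : ℂ) := by
      have e0 : (fun _ : ℝ => (1 : ℂ)) = eM 0 := by funext θ; rw [eM_zero]
      simp only [sT, Matrix.of_apply, e0, sC_eM, sub_eq_zero, Nat.cast_inj, Fin.val_inj,
        ite_mul, one_mul, zero_mul, Finset.sum_ite_eq, Finset.mem_univ, if_true]
      rw [EuclideanSpace.norm_sq_eq]
      push_cast
      refine Finset.sum_congr rfl fun i _ => ?_
      rw [← Complex.conj_mul', Complex.star_def]
    rw [h2] at key
    have hpi : ((2 * π : ℝ) : ℂ) ≠ 0 := by exact_mod_cast (by positivity : (2 * π : ℝ) ≠ 0)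
    rw [eq_inv_mul_iff_mul_eq₀ hpi] at key
    exact_mod_cast key.symm

lemma norm_2pi_inv : ‖((2 * π : ℝ) : ℂ)⁻¹‖ = (2 * π)⁻¹ := by
  rw [norm_inv, Complex.norm_real, Real.norm_of_nonneg (by positivity)]

lemma sT_opnorm (g : ℝ → ℂ) (hg : AEStronglyMeasurable g muT) (C : ℝ) (hC : ∀ θ, ‖g θ‖ ≤ C)
    (n : ℕ) : ‖sT g n‖ ≤ C := by
  have hC0 : 0 ≤ C := (norm_nonneg _).trans (hC 0)
  have hgi : Integrable g muT := Integrable.of_bound hg C (Eventually.of_forall hC)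
  refine opnorm_le_of_bilin _ C hC0 fun x y => ?_
  have e1 : ∑ i, ∑ j, star (y i) * sT g n i j * x j =
      ∑ i, ∑ j, sT g n i j * (star (y i) * x j) :=
    Finset.sum_congr rfl fun i _ => Finset.sum_congr rfl fun j _ => by ring
  rw [e1, sum_sC hgi, norm_mul, norm_2pi_inv]
  obtain ⟨ix, px⟩ := parseval n x
  obtain ⟨iy, py⟩ := parseval n y
  have h2 : ∀ θ, ∑ i : Fin n, ∑ j : Fin n, star (eM (i : ℕ) θ) * (star (y i) * x j) * eM (j : ℕ) θ =
      star (∑ i : Fin n, y i * eM (i : ℕ) θ) * ∑ j : Fin n, x j * eM (j : ℕ) θ := by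
    intro θ
    rw [star_sum, Finset.sum_mul_sum]
    refine Finset.sum_congr rfl fun i _ => Finset.sum_congr rfl fun j _ => ?_
    rw [star_mul]; ring
  have h3 : ‖∫ θ, g θ * (∑ i : Fin n, ∑ j : Fin n, star (eM (i : ℕ) θ) * (star (y i) * x j) * eM (j : ℕ) θ) ∂muT‖
      ≤ ∫ θ, C / 2 * (‖∑ j : Fin n, x j * eM (j : ℕ) θ‖ ^ 2 + ‖∑ j : Fin n, y j * eM (j : ℕ) θ‖ ^ 2) ∂muT := by
    refine norm_integral_le_of_norm_le ((ix.add iy).const_mul _) (Eventually.of_forall fun θ => ?_)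
    rw [h2, norm_mul, norm_mul, norm_star]
    set a := ‖∑ j : Fin n, x j * eM (j : ℕ) θ‖
    set b := ‖∑ j : Fin n, y j * eM (j : ℕ) θ‖
    have ha : 0 ≤ a := norm_nonneg _
    have hb : 0 ≤ b := norm_nonneg _
    calc ‖g θ‖ * (b * a) ≤ C * (b * a) := mul_le_mul_of_nonneg_right (hC θ) (by positivity)
      _ ≤ C / 2 * (a ^ 2 + b ^ 2) := by nlinarith [mul_nonneg hC0 (sq_nonneg (a - b))]
  rw [integral_const_mul, integral_add ix iy, px, py] at h3
  calc _ ≤ (2 * π)⁻¹ * (C / 2 * (2 * π * ‖x‖ ^ 2 + 2 * π * ‖y‖ ^ 2)) :=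
        mul_le_mul_of_nonneg_left h3 (by positivity)
    _ = _ := by field_simp

lemma sT_trace_le {f : ℝ → ℂ} (hf : Integrable f muT) (n : ℕ) (X : Matrix (Fin n) (Fin n) ℂ) :
    ‖(sT f n * X).trace‖ ≤ (2 * π)⁻¹ * (∫ θ, ‖f θ‖ ∂muT) * (n * ‖X‖) := by
  have e1 : (sT f n * X).trace = ∑ i, ∑ j, sT f n i j * X j i := by
    simp [Matrix.trace, Matrix.mul_apply]
  rw [e1, sum_sC hf n (fun i j => X j i), norm_mul, norm_2pi_inv, mul_assoc]
  refine mul_le_mul_of_nonneg_left ?_ (by positivity)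
  rw [← integral_mul_const]
  refine norm_integral_le_of_norm_le (hf.norm.mul_const _) (Eventually.of_forall fun θ => ?_)
  rw [norm_mul]
  refine mul_le_mul_of_nonneg_left ?_ (norm_nonneg _)
  set u : EuclideanSpace ℂ (Fin n) := WithLp.toLp 2 fun i => star (eM (i : ℕ) θ) with hu
  have hun : ‖u‖ ^ 2 = n := by
    rw [EuclideanSpace.norm_sq_eq]; simp [hu, eM_norm]
  have h := bilin_le X u u
  have e2 : ∑ i : Fin n, ∑ j : Fin n, star (eM (i : ℕ) θ) * X j i * eM (j : ℕ) θ =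
      ∑ i, ∑ j, star (u i) * X i j * u j := by
    rw [Finset.sum_comm]
    refine Finset.sum_congr rfl fun i _ => Finset.sum_congr rfl fun j _ => ?_
    simp only [hu, star_star]; ring
  rw [e2]
  calc _ ≤ ‖X‖ * ‖u‖ * ‖u‖ := h
    _ = n * ‖X‖ := by rw [← hun]; ring

end part2

section part3
open scoped Matrix.Norms.L2Operator

section small
variable {ι κ ι' κ' : ℕ → Type} [∀ n, Fintype (ι n)] [∀ n, Fintype (κ n)]
  [∀ n, DecidableEq (ι n)] [∀ n, DecidableEq (κ n)]
  [∀ n, Fintype (ι' n)] [∀ n, Fintype (κ' n)]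
  [∀ n, DecidableEq (ι' n)] [∀ n, DecidableEq (κ' n)]

set_option linter.unusedSectionVars false

/-- `A n` is negligible in normalized trace norm. -/
def TrSmall (A : ∀ n, Matrix (ι n) (κ n) ℂ) : Prop :=
  ∀ ε > (0 : ℝ), ∀ᶠ n : ℕ in atTop, ∀ X : Matrix (κ n) (ι n) ℂ,
    ‖(A n * X).trace‖ ≤ ε * n * ‖X‖

lemma TrSmall.zero : TrSmall (fun n => (0 : Matrix (ι n) (κ n) ℂ)) := by
  intro ε hε
  refine Eventually.of_forall fun n X => ?_
  simp only [Matrix.zero_mul, Matrix.trace_zero, norm_zero]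
  positivity

lemma TrSmall.add {A B : ∀ n, Matrix (ι n) (κ n) ℂ} (hA : TrSmall A) (hB : TrSmall B) :
    TrSmall (fun n => A n + B n) := by
  intro ε hε
  filter_upwards [hA (ε / 2) (half_pos hε), hB (ε / 2) (half_pos hε)] with n h1 h2 X
  rw [Matrix.add_mul, Matrix.trace_add]
  calc _ ≤ _ := norm_add_le _ _
    _ ≤ ε / 2 * n * ‖X‖ + ε / 2 * n * ‖X‖ := add_le_add (h1 X) (h2 X)
    _ = _ := by ring

lemma TrSmall.mul_left {A : ∀ n, Matrix (ι n) (κ n) ℂ} (hA : TrSmall A)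
    (Y : ∀ n, Matrix (ι' n) (ι n) ℂ) (C : ℝ) (hY : ∀ n, ‖Y n‖ ≤ C) :
    TrSmall (fun n => Y n * A n) := by
  have hC : 0 ≤ C := (norm_nonneg _).trans (hY 0)
  intro ε hε
  filter_upwards [hA (ε / (C + 1)) (by positivity)] with n h1 X
  rw [Matrix.mul_assoc, Matrix.trace_mul_comm, Matrix.mul_assoc]
  calc _ ≤ _ := h1 (X * Y n)
    _ ≤ ε / (C + 1) * n * (‖X‖ * (C + 1)) := by
        refine mul_le_mul_of_nonneg_left ?_ (by positivity)
        refine (Matrix.l2_opNorm_mul _ _).trans ?_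
        exact mul_le_mul_of_nonneg_left ((hY n).trans (by linarith)) (norm_nonneg _)
    _ = _ := by field_simp

lemma TrSmall.mul_right {A : ∀ n, Matrix (ι n) (κ n) ℂ} (hA : TrSmall A)
    (Y : ∀ n, Matrix (κ n) (κ' n) ℂ) (C : ℝ) (hY : ∀ n, ‖Y n‖ ≤ C) :
    TrSmall (fun n => A n * Y n) := by
  have hC : 0 ≤ C := (norm_nonneg _).trans (hY 0)
  intro ε hε
  filter_upwards [hA (ε / (C + 1)) (by positivity)] with n h1 X
  rw [Matrix.mul_assoc]
  calc _ ≤ _ := h1 (Y n * X)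
    _ ≤ ε / (C + 1) * n * ((C + 1) * ‖X‖) := by
        refine mul_le_mul_of_nonneg_left ?_ (by positivity)
        refine (Matrix.l2_opNorm_mul _ _).trans ?_
        exact mul_le_mul_of_nonneg_right ((hY n).trans (by linarith)) (norm_nonneg _)
    _ = _ := by field_simp

lemma TrSmall.smul {A : ∀ n, Matrix (ι n) (κ n) ℂ} (hA : TrSmall A) (a : ℂ) :
    TrSmall (fun n => a • A n) := by
  intro ε hε
  filter_upwards [hA (ε / (‖a‖ + 1)) (by positivity)] with n h1 X
  rw [Matrix.smul_mul, Matrix.trace_smul, smul_eq_mul, norm_mul]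
  calc _ ≤ (‖a‖ + 1) * (ε / (‖a‖ + 1) * n * ‖X‖) :=
        mul_le_mul (by linarith) (h1 X) (norm_nonneg _) (by positivity)
    _ = _ := by field_simp

lemma TrSmall.sum {α : Type*} (s : Finset α) {A : α → ∀ n, Matrix (ι n) (κ n) ℂ}
    (hA : ∀ a ∈ s, TrSmall (A a)) : TrSmall (fun n => ∑ a ∈ s, A a n) := by
  classical
  induction s using Finset.induction_on with
  | empty => simpa using TrSmall.zero
  | insert a s ha ih =>
    simp only [Finset.sum_insert ha]
    exact (hA a (Finset.mem_insert_self _ _)).add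
      (ih fun b hb => hA b (Finset.mem_insert_of_mem hb))

end small

lemma card_bad (n : ℕ) (m : ℤ) :
    (Finset.univ.filter fun i : Fin n => ¬ (0 ≤ ((i : ℕ) : ℤ) - m ∧ ((i : ℕ) : ℤ) - m < n)).card
      ≤ m.natAbs := by
  conv_rhs => rw [← Finset.card_range m.natAbs]
  refine Finset.card_le_card_of_injOn (fun i => if 0 ≤ m then (i : ℕ) else n - 1 - i) ?_ ?_
  · intro i hi
    simp only [Finset.coe_filter, Finset.mem_univ, true_and, Set.mem_ofPred_eq] at hi
    simp only [Finset.coe_range, Set.mem_Iio]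
    have := i.2
    split_ifs <;> omega
  · intro i _ j _ h
    have := i.2
    have := j.2
    apply Fin.ext
    simp only at h
    split_ifs at h <;> omega

lemma prod_mono (m : ℤ) (g : ℝ → ℂ) (hg : AEStronglyMeasurable g muT) (C : ℝ)
    (hC : ∀ θ, ‖g θ‖ ≤ C) (n : ℕ) (X : Matrix (Fin n) (Fin n) ℂ) :
    ‖((sT (eM m) n * sT g n - sT (fun θ => eM m θ * g θ) n) * X).trace‖
      ≤ m.natAbs * (C * ‖X‖) := by
  have hC0 : 0 ≤ C := (norm_nonneg _).trans (hC 0)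
  set P : Fin n → Prop := fun i => ¬ (0 ≤ ((i : ℕ) : ℤ) - m ∧ ((i : ℕ) : ℤ) - m < n) with hP
  set H := sT (fun θ => eM m θ * g θ) n with hH
  have hHn : ‖H‖ ≤ C := by
    refine sT_opnorm _ ((eM_cont m).aestronglyMeasurable.mul hg) C (fun θ => ?_) n
    rw [Pi.mul_apply, norm_mul, eM_norm, one_mul]; exact hC θ
  have hD : ∀ i j, (sT (eM m) n * sT g n - H) i j = if P i then - H i j else 0 := by
    intro i j
    have h1 : H i j = sC g (((i : ℕ) : ℤ) - m - ((j : ℕ) : ℤ)) := by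
      simp only [hH, sT, Matrix.of_apply, sC_eM_zero]; congr 1; ring
    rw [Matrix.sub_apply, Matrix.mul_apply]
    split_ifs with h
    · rw [Finset.sum_eq_zero, zero_sub]
      intro l _
      simp only [sT, Matrix.of_apply, sC_eM]
      rw [if_neg, zero_mul]
      intro h2
      apply h
      have := l.2
      constructor <;> omega
    · simp only [hP, not_not] at h
      obtain ⟨l, hl⟩ : ∃ l : Fin n, ((l : ℕ) : ℤ) = ((i : ℕ) : ℤ) - m :=
        ⟨⟨(((i : ℕ) : ℤ) - m).toNat, by omega⟩, Int.toNat_of_nonneg h.1⟩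
      rw [Finset.sum_eq_single l]
      · rw [h1]
        simp only [sT, Matrix.of_apply, sC_eM]
        rw [if_pos (by omega), hl, one_mul, sub_self]
      · intro l' _ hl'
        simp only [sT, Matrix.of_apply, sC_eM]
        rw [if_neg, zero_mul]
        intro h2
        apply hl'
        apply Fin.ext
        omega
      · simp
  have ht : ((sT (eM m) n * sT g n - H) * X).trace =
      ∑ i, if P i then - (H * X) i i else 0 := by
    simp only [Matrix.trace, Matrix.diag_apply]
    refine Finset.sum_congr rfl fun i _ => ?_
    rw [Matrix.mul_apply]
    simp only [hD]
    split_ifs with h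
    · simp [Matrix.mul_apply]
    · simp
  rw [ht, ← Finset.sum_filter]
  calc _ ≤ ∑ i ∈ Finset.univ.filter P, C * ‖X‖ := by
        refine norm_sum_le_of_le _ fun i _ => ?_
        rw [norm_neg]
        refine (entry_le (H * X) i i).trans ((Matrix.l2_opNorm_mul _ _).trans ?_)
        exact mul_le_mul_of_nonneg_right hHn (norm_nonneg _)
    _ ≤ _ := by
        rw [Finset.sum_const, nsmul_eq_mul]
        refine mul_le_mul_of_nonneg_right ?_ (by positivity)
        exact_mod_cast card_bad n m

lemma prod_mono_small (m : ℤ) (g : ℝ → ℂ) (hg : AEStronglyMeasurable g muT) (C : ℝ)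
    (hC : ∀ θ, ‖g θ‖ ≤ C) :
    TrSmall (fun n => sT (eM m) n * sT g n - sT (fun θ => eM m θ * g θ) n) := by
  intro ε hε
  obtain ⟨N, hN⟩ := exists_nat_gt (m.natAbs * C / ε)
  filter_upwards [eventually_ge_atTop N] with n hn X
  refine (prod_mono m g hg C hC n X).trans ?_
  rw [← mul_assoc]
  refine mul_le_mul_of_nonneg_right ?_ (norm_nonneg _)
  rw [div_lt_iff₀ hε] at hN
  have : (N : ℝ) ≤ n := by exact_mod_cast hn
  nlinarith

lemma eM_integrable (m : ℤ) : Integrable (eM m) muT :=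
  ((eM_cont m).integrableOn_Icc (a := -π) (b := π)).mono_set Set.Ioc_subset_Icc_self

lemma int_mul_bdd {f g : ℝ → ℂ} (hf : Integrable f muT) (hg : AEStronglyMeasurable g muT) {C : ℝ}
    (hC : ∀ θ, ‖g θ‖ ≤ C) : Integrable (fun θ => f θ * g θ) muT :=
  hf.mul_bdd hg (Eventually.of_forall hC)

lemma prod_small (f g : ℝ → ℂ) (hf : Integrable f muT)
    (hg : AEStronglyMeasurable g muT) (C : ℝ) (hC : ∀ θ, ‖g θ‖ ≤ C) :
    TrSmall (fun n => sT f n * sT g n - sT (fun θ => f θ * g θ) n) := by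
  have hC0 : 0 ≤ C := (norm_nonneg _).trans (hC 0)
  have htrig : ∀ p ∈ Submodule.span ℂ (Set.range eM), Integrable p muT ∧
      TrSmall (fun n => sT p n * sT g n - sT (fun θ => p θ * g θ) n) := by
    intro p hp
    refine Submodule.span_induction (p := fun p _ => Integrable p muT ∧
      TrSmall (fun n => sT p n * sT g n - sT (fun θ => p θ * g θ) n)) ?_ ?_ ?_ ?_ hp
    · rintro _ ⟨m, rfl⟩
      exact ⟨eM_integrable m, prod_mono_small m g hg C hC⟩
    · refine ⟨integrable_zero _ _ _, ?_⟩
      have : ∀ n, sT (0 : ℝ → ℂ) n = 0 := fun n => by ext i j; simp [sT, sC]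
      have h2 : ∀ n, sT (fun θ => (0 : ℝ → ℂ) θ * g θ) n = 0 := fun n => by
        ext i j; simp [sT, sC]
      simp only [this, h2, Matrix.zero_mul, sub_zero]
      exact TrSmall.zero
    · rintro x y _ _ ⟨hx, hx'⟩ ⟨hy, hy'⟩
      refine ⟨hx.add hy, ?_⟩
      convert! hx'.add hy' using 2 with n
      have e1 : sT (x + y) n = sT x n + sT y n := sT_add hx hy n
      have e2 : sT (fun θ => (x + y) θ * g θ) n =
          sT (fun θ => x θ * g θ) n + sT (fun θ => y θ * g θ) n := by
        rw [← sT_add (int_mul_bdd hx hg hC) (int_mul_bdd hy hg hC)]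
        simp only [Pi.add_apply, add_mul]
      rw [e1, e2, Matrix.add_mul]; abel
    · rintro a x _ ⟨hx, hx'⟩
      refine ⟨hx.smul a, ?_⟩
      convert! hx'.smul a using 2 with n
      have e1 : sT (a • x) n = a • sT x n := sT_smul a x n
      have e2 : sT (fun θ => (a • x) θ * g θ) n = a • sT (fun θ => x θ * g θ) n := by
        rw [← sT_smul]
        simp only [Pi.smul_apply, smul_eq_mul, mul_assoc]
      rw [e1, e2, Matrix.smul_mul, smul_sub]
  intro ε hε
  set δ : ℝ := ε / (4 * (C + 1)) * (2 * π) with hδ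
  have hδ0 : 0 < δ := by positivity
  obtain ⟨p, hp, hpf⟩ := trig_dense f hf δ hδ0
  obtain ⟨hpi, hps⟩ := htrig p hp
  filter_upwards [hps (ε / 2) (half_pos hε)] with n h1 X
  have hfp : Integrable (fun θ => f θ - p θ) muT := hf.sub hpi
  have hdec : sT f n * sT g n - sT (fun θ => f θ * g θ) n =
      sT (fun θ => f θ - p θ) n * sT g n - sT (fun θ => (f θ - p θ) * g θ) n +
        (sT p n * sT g n - sT (fun θ => p θ * g θ) n) := by
    have e2 : sT (fun θ => (f θ - p θ) * g θ) n =
        sT (fun θ => f θ * g θ) n - sT (fun θ => p θ * g θ) n := by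
      rw [← sT_sub (int_mul_bdd hf hg hC) (int_mul_bdd hpi hg hC)]
      simp only [sub_mul]
    rw [e2, sT_sub hf hpi, Matrix.sub_mul]; abel
  rw [hdec, Matrix.add_mul, Matrix.trace_add, Matrix.sub_mul, Matrix.trace_sub]
  have hintz : 0 ≤ ∫ θ, ‖f θ - p θ‖ ∂muT := integral_nonneg fun _ => norm_nonneg _
  have b1 : ‖(sT (fun θ => f θ - p θ) n * sT g n * X).trace‖ ≤
      (2 * π)⁻¹ * δ * (n * (C * ‖X‖)) := by
    rw [Matrix.mul_assoc]
    refine (sT_trace_le hfp n (sT g n * X)).trans ?_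
    refine mul_le_mul (mul_le_mul_of_nonneg_left hpf (by positivity)) ?_ (by positivity)
      (by positivity)
    refine mul_le_mul_of_nonneg_left ((Matrix.l2_opNorm_mul _ _).trans ?_) (by positivity)
    exact mul_le_mul_of_nonneg_right (sT_opnorm g hg C hC n) (norm_nonneg _)
  have b2 : ‖(sT (fun θ => (f θ - p θ) * g θ) n * X).trace‖ ≤
      (2 * π)⁻¹ * (δ * C) * (n * ‖X‖) := by
    refine (sT_trace_le (int_mul_bdd hfp hg hC) n X).trans ?_
    refine mul_le_mul_of_nonneg_right (mul_le_mul_of_nonneg_left ?_ (by positivity)) (by positivity)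
    calc (∫ θ, ‖(f θ - p θ) * g θ‖ ∂muT) ≤ ∫ θ, ‖f θ - p θ‖ * C ∂muT := by
          refine integral_mono (int_mul_bdd hfp hg hC).norm (hfp.norm.mul_const _) fun θ => ?_
          simp only [norm_mul]
          exact mul_le_mul_of_nonneg_left (hC θ) (norm_nonneg _)
      _ ≤ δ * C := by
          rw [integral_mul_const]
          exact mul_le_mul_of_nonneg_right hpf hC0
  have hnx : 0 ≤ n * ‖X‖ := by positivity
  have hfin : (2 * π)⁻¹ * δ * (n * (C * ‖X‖)) + (2 * π)⁻¹ * (δ * C) * (n * ‖X‖)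
      ≤ ε / 2 * n * ‖X‖ := by
    have e : (2 * π)⁻¹ * δ = ε / (4 * (C + 1)) := by
      rw [hδ]; field_simp
    have e' : ε / (4 * (C + 1)) * C ≤ ε / 4 := by
      rw [div_mul_eq_mul_div, div_le_div_iff₀ (by positivity) (by positivity)]
      nlinarith
    calc _ = 2 * ((2 * π)⁻¹ * δ * C) * (n * ‖X‖) := by ring
      _ ≤ 2 * (ε / 4) * (n * ‖X‖) := by
          rw [e]
          exact mul_le_mul_of_nonneg_right (by linarith) hnx
      _ = _ := by ring
  calc _ ≤ _ := norm_add_le _ _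
    _ ≤ (2 * π)⁻¹ * δ * (n * (C * ‖X‖)) + (2 * π)⁻¹ * (δ * C) * (n * ‖X‖) + ε / 2 * n * ‖X‖ :=
        add_le_add ((norm_sub_le _ _).trans (add_le_add b1 b2)) (h1 X)
    _ ≤ ε / 2 * n * ‖X‖ + ε / 2 * n * ‖X‖ := by gcongr
    _ = _ := by ring

end part3
/-- resolvent-type matrix `(1 + A Aᴴ)⁻¹` -/
def rs {m n : Type*} [Fintype m] [Fintype n] [DecidableEq m] (A : Matrix m n ℂ) : Matrix m m ℂ :=
  (1 + A * Aᴴ)⁻¹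

section rsbasic
open scoped ComplexOrder
variable {m n : Type*} [Fintype m] [Fintype n] [DecidableEq m]

lemma rs_posDef (A : Matrix m n ℂ) : (1 + A * Aᴴ).PosDef :=
  Matrix.PosDef.one.add_posSemidef (Matrix.posSemidef_self_mul_conjTranspose A)

lemma rs_isUnit (A : Matrix m n ℂ) : IsUnit (1 + A * Aᴴ).det :=
  (Matrix.isUnit_iff_isUnit_det _).1 (rs_posDef A).isUnit

lemma rs_mul (A : Matrix m n ℂ) : rs A * (1 + A * Aᴴ) = 1 := Matrix.nonsing_inv_mul _ (rs_isUnit A)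

lemma mul_rs (A : Matrix m n ℂ) : (1 + A * Aᴴ) * rs A = 1 := Matrix.mul_nonsing_inv _ (rs_isUnit A)

lemma rs_herm (A : Matrix m n ℂ) : (rs A)ᴴ = rs A := by
  rw [rs, Matrix.conjTranspose_nonsing_inv]
  congr 1
  simp [Matrix.conjTranspose_add, Matrix.conjTranspose_mul]

lemma rs_decomp (A : Matrix m n ℂ) :
    rs A = rs A * (rs A)ᴴ + (rs A * A) * (rs A * A)ᴴ := by
  have h : rs A * (1 + A * Aᴴ) * rs A = rs A := by rw [rs_mul, Matrix.one_mul]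
  rw [Matrix.conjTranspose_mul, rs_herm]
  conv_lhs => rw [← h]
  simp only [Matrix.mul_add, Matrix.add_mul, Matrix.mul_one, Matrix.mul_assoc]

lemma rs_continuous : Continuous (fun A : Matrix m n ℂ => rs A) := by
  have h1 : Continuous (fun A : Matrix m n ℂ => 1 + A * Aᴴ) := by fun_prop
  simp only [rs, Matrix.inv_def, Ring.inverse_eq_inv']
  refine Continuous.smul (Continuous.inv₀ h1.matrix_det fun A => ?_) h1.matrix_adjugate
  exact (rs_isUnit A).ne_zero

end rsbasic

section rsnorm
open scoped Matrix.Norms.L2Operator MatrixOrder ComplexOrder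
variable {m n : Type*} [Fintype m] [Fintype n] [DecidableEq m] [DecidableEq n]

lemma norm_self_mul_conjT (A : Matrix m n ℂ) : ‖A * Aᴴ‖ = ‖A‖ * ‖A‖ := by
  have := Matrix.l2_opNorm_conjTranspose_mul_self Aᴴ
  rwa [Matrix.conjTranspose_conjTranspose, Matrix.l2_opNorm_conjTranspose] at this

lemma rs_norms (A : Matrix m n ℂ) : ‖rs A‖ ≤ 1 ∧ ‖rs A * A‖ ≤ 1 := by
  have p1 : 0 ≤ rs A * (rs A)ᴴ :=
    Matrix.nonneg_iff_posSemidef.2 (Matrix.posSemidef_self_mul_conjTranspose _)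
  have p2 : 0 ≤ (rs A * A) * (rs A * A)ᴴ :=
    Matrix.nonneg_iff_posSemidef.2 (Matrix.posSemidef_self_mul_conjTranspose _)
  have h1 : ‖rs A * (rs A)ᴴ‖ ≤ ‖rs A‖ := by
    refine CStarAlgebra.norm_le_norm_of_nonneg_of_le p1 ?_
    conv_rhs => rw [rs_decomp A]
    exact le_add_of_nonneg_right p2
  have h2 : ‖(rs A * A) * (rs A * A)ᴴ‖ ≤ ‖rs A‖ := by
    refine CStarAlgebra.norm_le_norm_of_nonneg_of_le p2 ?_
    conv_rhs => rw [rs_decomp A]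
    exact le_add_of_nonneg_left p1
  rw [norm_self_mul_conjT] at h1 h2
  have h3 : ‖rs A‖ ≤ 1 := by
    by_contra hc
    push Not at hc
    nlinarith
  refine ⟨h3, ?_⟩
  by_contra hc
  push Not at hc
  nlinarith

lemma norm_one_le : ‖(1 : Matrix m m ℂ)‖ ≤ 1 := by
  rw [← Matrix.diagonal_one, Matrix.l2_opNorm_diagonal]
  exact (pi_norm_le_iff_of_nonneg zero_le_one).2 fun i => by simp

lemma rs_pow_norm (A : Matrix m n ℂ) (k : ℕ) : ‖rs A ^ k‖ ≤ 1 := by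
  induction k with
  | zero => rw [pow_zero]; exact norm_one_le
  | succ k ih =>
    rw [pow_succ]
    refine (Matrix.l2_opNorm_mul _ _).trans ?_
    exact mul_le_one₀ ih (norm_nonneg _) (rs_norms A).1

lemma rs_pow_norm' (A : Matrix m n ℂ) (k : ℕ) : ‖Aᴴ * rs A ^ (k + 1)‖ ≤ 1 := by
  rw [pow_succ', ← Matrix.mul_assoc]
  refine (Matrix.l2_opNorm_mul _ _).trans ?_
  refine mul_le_one₀ ?_ (norm_nonneg _) (rs_pow_norm A k)
  have : Aᴴ * rs A = (rs A * A)ᴴ := by rw [Matrix.conjTranspose_mul, rs_herm]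
  rw [this, Matrix.l2_opNorm_conjTranspose]
  exact (rs_norms A).2

end rsnorm

section block
open scoped Matrix.Norms.L2Operator
variable {ρ τ υ : Type} [Fintype ρ] [Fintype τ] [Fintype υ] [DecidableEq ρ] [DecidableEq τ]
  [DecidableEq υ]

set_option linter.unusedSectionVars false

lemma bT_apply (f : ℝ → Matrix ρ τ ℂ) (n : ℕ) (p : Fin n × ρ) (q : Fin n × τ) :
    blockToeplitz f n n p q = sT (fun θ => f θ p.2 q.2) n p.1 q.1 := by
  have hle : -π ≤ π := by linarith [Real.pi_pos]
  simp only [blockToeplitz, fCoeff, Matrix.of_apply, sT, sC, intervalIntegral.integral_of_le hle]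
  congr 2
  funext θ
  congr 2
  push_cast
  ring

/-- block embedding -/
def Pe (n : ℕ) (a : ρ) : Matrix (Fin n × ρ) (Fin n) ℂ :=
  Matrix.of fun p j => if p.1 = j ∧ p.2 = a then 1 else 0

lemma PeH_Pe (n : ℕ) (a b : ρ) :
    (Pe n a)ᴴ * Pe n b = if a = b then 1 else 0 := by
  ext i j
  rw [Matrix.mul_apply, Fintype.sum_prod_type]
  simp only [Pe, Matrix.conjTranspose_apply, Matrix.of_apply]
  rw [Finset.sum_eq_single i, Finset.sum_eq_single a]
  · by_cases hab : a = b
    · simp [hab, Matrix.one_apply]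
    · simp [hab]
  · intro c _ hc; simp [hc]
  · simp
  · intro c _ hc; simp [hc]
  · simp

lemma Pe_norm (n : ℕ) (a : ρ) : ‖Pe n a‖ ≤ 1 := by
  have h := Matrix.l2_opNorm_conjTranspose_mul_self (Pe n a)
  rw [PeH_Pe, if_pos rfl] at h
  have h2 : ‖(1 : Matrix (Fin n) (Fin n) ℂ)‖ ≤ 1 := norm_one_le
  by_contra hc
  push Not at hc
  nlinarith

lemma PeH_norm (n : ℕ) (a : ρ) : ‖(Pe n a)ᴴ‖ ≤ 1 := by
  rw [Matrix.l2_opNorm_conjTranspose]; exact Pe_norm n a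

lemma sum_Pe_apply (n : ℕ) (M : ρ → τ → Matrix (Fin n) (Fin n) ℂ) (p : Fin n × ρ)
    (q : Fin n × τ) :
    (∑ a, ∑ b, Pe n a * M a b * (Pe n b)ᴴ) p q = M p.2 q.2 p.1 q.1 := by
  have h1 : ∀ a b, (Pe n a * M a b * (Pe n b)ᴴ) p q =
      if p.2 = a ∧ q.2 = b then M a b p.1 q.1 else 0 := by
    intro a b
    simp only [Matrix.mul_apply, Pe, Matrix.conjTranspose_apply, Matrix.of_apply]
    rw [Finset.sum_eq_single q.1, Finset.sum_eq_single p.1]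
    · by_cases h1 : p.2 = a <;> by_cases h2 : q.2 = b <;> simp [h1, h2]
    · intro c _ hc; simp [Ne.symm hc]
    · simp
    · intro c _ hc; simp [Ne.symm hc]
    · simp
  rw [Matrix.sum_apply]
  simp only [Matrix.sum_apply, h1]
  rw [Finset.sum_eq_single p.2, Finset.sum_eq_single q.2]
  · simp
  · intro c _ hc; simp [Ne.symm hc]
  · simp
  · intro c _ hc; simp [Ne.symm hc]
  · simp

lemma bT_eq (f : ℝ → Matrix ρ τ ℂ) (n : ℕ) :
    blockToeplitz f n n = ∑ a, ∑ b, Pe n a * sT (fun θ => f θ a b) n * (Pe n b)ᴴ := by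
  ext p q
  rw [sum_Pe_apply, bT_apply]

lemma sT_sum {α : Type*} (s : Finset α) (F : α → ℝ → ℂ) (hF : ∀ a ∈ s, Integrable (F a) muT)
    (n : ℕ) : sT (fun θ => ∑ a ∈ s, F a θ) n = ∑ a ∈ s, sT (F a) n := by
  ext i j
  rw [Matrix.sum_apply]
  simp only [sT, sC, Matrix.of_apply, Finset.sum_mul]
  rw [integral_finsetSum _ fun a ha => int_mul_eM (hF a ha) _, Finset.mul_sum]

lemma prod_block (f : ℝ → Matrix ρ τ ℂ) (g : ℝ → Matrix τ υ ℂ)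
    (hf : ∀ a b, Integrable (fun θ => f θ a b) muT)
    (hg : ∀ a b, AEStronglyMeasurable (fun θ => g θ a b) muT)
    (C : ℝ) (hC : ∀ a b θ, ‖g θ a b‖ ≤ C) :
    TrSmall (fun n => blockToeplitz (fun θ => f θ * g θ) n n -
      blockToeplitz f n n * blockToeplitz g n n) := by
  have key : TrSmall (fun n => ∑ a, ∑ c, ∑ b, Pe n a * ((-1 : ℂ) •
      (sT (fun θ => f θ a b) n * sT (fun θ => g θ b c) n - sT (fun θ => f θ a b * g θ b c) n))
        * (Pe n c)ᴴ) := by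
    refine TrSmall.sum _ fun a _ => TrSmall.sum _ fun c _ => TrSmall.sum _ fun b _ => ?_
    refine TrSmall.mul_right ?_ (fun n => (Pe n c)ᴴ) 1 fun n => PeH_norm n c
    refine TrSmall.mul_left ?_ (fun n => Pe n a) 1 fun n => Pe_norm n a
    exact (prod_small _ _ (hf a b) (hg b c) C (hC b c)).smul _
  convert key using 2 with n
  have e1 : ∀ a c, (∑ b, Pe n a * ((-1 : ℂ) •
      (sT (fun θ => f θ a b) n * sT (fun θ => g θ b c) n - sT (fun θ => f θ a b * g θ b c) n))
        * (Pe n c)ᴴ) = Pe n a * (∑ b, ((-1 : ℂ) •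
      (sT (fun θ => f θ a b) n * sT (fun θ => g θ b c) n - sT (fun θ => f θ a b * g θ b c) n)))
        * (Pe n c)ᴴ := by
    intro a c
    rw [Matrix.mul_sum, Matrix.sum_mul]
  simp only [e1]
  ext p q
  rw [sum_Pe_apply]
  rw [Matrix.sub_apply, bT_apply, Matrix.mul_apply, Fintype.sum_prod_type]
  simp only [bT_apply, Matrix.mul_apply]
  rw [sT_sum _ _ fun b _ => int_mul_bdd (hf p.2 b) (hg b q.2) (hC b q.2)]
  simp only [Matrix.sum_apply, Matrix.smul_apply, Matrix.sub_apply, Matrix.mul_apply, smul_eq_mul,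
    neg_mul, one_mul, neg_sub, Finset.sum_sub_distrib]
  congr 1
  exact Finset.sum_comm

lemma bT_conj (f : ℝ → Matrix ρ τ ℂ) (n : ℕ) :
    (blockToeplitz f n n)ᴴ = blockToeplitz (fun θ => (f θ)ᴴ) n n := by
  ext p q
  rw [Matrix.conjTranspose_apply, bT_apply, bT_apply]
  simp only [sT, sC, Matrix.of_apply, Matrix.conjTranspose_apply]
  rw [star_mul', Complex.star_def, ← integral_conj, map_inv₀, Complex.conj_ofReal]
  congr 2
  funext θ
  rw [map_mul, ← Complex.star_def, eM_conj]
  congr 2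
  ring

lemma bT_one (n : ℕ) : blockToeplitz (fun _ => (1 : Matrix ρ ρ ℂ)) n n = 1 := by
  have e0 : (fun _ : ℝ => (1 : ℂ)) = eM 0 := by funext θ; rw [eM_zero]
  ext p q
  rw [bT_apply]
  obtain ⟨i, a⟩ := p
  obtain ⟨j, b⟩ := q
  by_cases h : a = b
  · subst h
    simp only [Matrix.one_apply_eq]
    rw [e0]
    simp only [sT, Matrix.of_apply, sC_eM, Matrix.one_apply, sub_eq_zero, Nat.cast_inj,
      Fin.val_inj, Prod.mk.injEq, and_true]
  · simp [h, sT, sC, Matrix.one_apply, Prod.ext_iff]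

lemma bT_sub (f g : ℝ → Matrix ρ τ ℂ) (hf : ∀ a b, Integrable (fun θ => f θ a b) muT)
    (hg : ∀ a b, Integrable (fun θ => g θ a b) muT) (n : ℕ) :
    blockToeplitz (fun θ => f θ - g θ) n n = blockToeplitz f n n - blockToeplitz g n n := by
  ext p q
  rw [Matrix.sub_apply, bT_apply, bT_apply, bT_apply]
  simp only [Matrix.sub_apply]
  rw [sT_sub (hf _ _) (hg _ _), Matrix.sub_apply]

lemma meas_comp (f : ℝ → Matrix ρ τ ℂ) (hf : ∀ a b, Integrable (fun θ => f θ a b) muT)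
    (φ : Matrix ρ τ ℂ → ℂ) (hφ : Continuous φ) :
    AEStronglyMeasurable (fun θ => φ (f θ)) muT := by
  have h1 : AEMeasurable (fun θ => (fun a b => f θ a b : ρ → τ → ℂ)) muT :=
    aemeasurable_pi_iff.2 fun a => aemeasurable_pi_iff.2 fun b =>
      (hf a b).aestronglyMeasurable.aemeasurable
  have h0 : Continuous (fun A : ρ → τ → ℂ => φ (Matrix.of A)) := hφ.comp continuous_id
  have h2 : Measurable (fun A : ρ → τ → ℂ => φ (Matrix.of A)) := by
    haveI i1 : OpensMeasurableSpace (τ → ℂ) := inferInstance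
    haveI i2 : SecondCountableTopology (τ → ℂ) := inferInstance
    haveI i3 : OpensMeasurableSpace (ρ → τ → ℂ) := inferInstance
    exact h0.measurable
  exact (h2.comp_aemeasurable h1).aestronglyMeasurable

lemma main_small (f : ℝ → Matrix ρ τ ℂ) (hf : ∀ a b, Integrable (fun θ => f θ a b) muT) (k : ℕ) :
    TrSmall (fun n => rs (blockToeplitz f n n) ^ k - blockToeplitz (fun θ => rs (f θ) ^ k) n n) := by
  have hmq : ∀ k a b, AEStronglyMeasurable (fun θ => (rs (f θ) ^ k) a b) muT := fun k a b =>
    meas_comp f hf (fun A => (rs A ^ k) a b) ((rs_continuous.pow k).matrix_elem a b)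
  have hbq : ∀ k a b θ, ‖(rs (f θ) ^ k) a b‖ ≤ 1 := fun k a b θ =>
    (entry_le _ a b).trans (rs_pow_norm _ _)
  have hiq : ∀ k a b, Integrable (fun θ => (rs (f θ) ^ k) a b) muT := fun k a b =>
    Integrable.of_bound (hmq k a b) 1 (Eventually.of_forall (hbq k a b))
  induction k with
  | zero =>
    simp only [pow_zero, bT_one, sub_self]
    exact TrSmall.zero
  | succ k ih =>
    have hfs : ∀ a b, Integrable (fun θ => ((f θ)ᴴ) a b) muT := fun a b => by
      simp only [Matrix.conjTranspose_apply]
      exact (Complex.conjCLE : ℂ →L[ℝ] ℂ).integrable_comp (hf b a)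
    have hm : ∀ a b, AEStronglyMeasurable (fun θ => ((f θ)ᴴ * rs (f θ) ^ (k + 1)) a b) muT :=
      fun a b => meas_comp f hf (fun A => (Aᴴ * rs A ^ (k + 1)) a b)
        ((continuous_id.matrix_conjTranspose.matrix_mul (rs_continuous.pow _)).matrix_elem a b)
    have hb : ∀ a b θ, ‖((f θ)ᴴ * rs (f θ) ^ (k + 1)) a b‖ ≤ 1 := fun a b θ =>
      (entry_le _ a b).trans (rs_pow_norm' _ _)
    have s1 := ih.mul_left (fun n => rs (blockToeplitz f n n)) 1 fun n => (rs_norms _).1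
    have s2 := (prod_block f (fun θ => (f θ)ᴴ * rs (f θ) ^ (k + 1)) hf hm 1 hb).mul_left
      (fun n => rs (blockToeplitz f n n)) 1 fun n => (rs_norms _).1
    have s3 := (prod_block (fun θ => (f θ)ᴴ) (fun θ => rs (f θ) ^ (k + 1)) hfs
      (hmq (k + 1)) 1 (hbq (k + 1))).mul_left
      (fun n => rs (blockToeplitz f n n) * blockToeplitz f n n) 1 fun n => (rs_norms _).2
    convert (s1.add s2).add s3 using 2 with n
    have e1 : (fun θ => f θ * ((f θ)ᴴ * rs (f θ) ^ (k + 1))) =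
        fun θ => rs (f θ) ^ k - rs (f θ) ^ (k + 1) := by
      funext θ
      rw [eq_sub_iff_add_eq']
      have := mul_rs (f θ)
      calc _ = (1 + f θ * (f θ)ᴴ) * rs (f θ) * rs (f θ) ^ k := by
            rw [pow_succ']
            simp only [Matrix.add_mul, Matrix.one_mul, Matrix.mul_assoc]
        _ = _ := by rw [this, Matrix.one_mul]
    rw [e1, bT_sub _ _ (hiq k) (hiq (k + 1)), ← bT_conj]
    set R := rs (blockToeplitz f n n) with hR
    set T := blockToeplitz f n n
    set B := blockToeplitz (fun θ => rs (f θ) ^ (k + 1)) n n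
    set B' := blockToeplitz (fun θ => rs (f θ) ^ k) n n
    set H := blockToeplitz (fun θ => (f θ)ᴴ * rs (f θ) ^ (k + 1)) n n
    have e2 : B = R * B + R * T * (Tᴴ * B) := by
      have := rs_mul T
      calc B = R * (1 + T * Tᴴ) * B := by rw [hR, this, Matrix.one_mul]
        _ = _ := by simp only [Matrix.mul_add, Matrix.add_mul, Matrix.mul_one, Matrix.mul_assoc]
    rw [pow_succ']
    conv_lhs => rw [e2]
    simp only [Matrix.mul_sub, Matrix.mul_assoc]
    abel

lemma trace_bT (f : ℝ → Matrix ρ ρ ℂ) (hf : ∀ a b, Integrable (fun θ => f θ a b) muT) (n : ℕ) :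
    (blockToeplitz f n n).trace = n * (((2 * π : ℝ) : ℂ)⁻¹ * ∫ θ, (f θ).trace ∂muT) := by
  simp only [Matrix.trace, Matrix.diag_apply, Fintype.sum_prod_type, bT_apply, sT, Matrix.of_apply,
    sub_self, sC, neg_zero, eM_zero, mul_one]
  rw [integral_finsetSum _ fun a _ => hf a a, Finset.sum_const, Finset.card_univ, Fintype.card_fin,
    Finset.mul_sum, nsmul_eq_mul]

lemma trace_tendsto (f : ℝ → Matrix ρ τ ℂ) (hf : ∀ a b, Integrable (fun θ => f θ a b) muT) (k : ℕ) :
    Integrable (fun θ => (rs (f θ) ^ k).trace) muT ∧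
    Tendsto (fun n : ℕ => (n : ℂ)⁻¹ * (rs (blockToeplitz f n n) ^ k).trace) atTop
      (𝓝 (((2 * π : ℝ) : ℂ)⁻¹ * ∫ θ, (rs (f θ) ^ k).trace ∂muT)) := by
  have hiq : ∀ a b, Integrable (fun θ => (rs (f θ) ^ k) a b) muT := fun a b =>
    Integrable.of_bound (meas_comp f hf (fun A => (rs A ^ k) a b)
      ((rs_continuous.pow k).matrix_elem a b)) 1
      (Eventually.of_forall fun θ => (entry_le _ a b).trans (rs_pow_norm _ _))
  refine ⟨?_, ?_⟩
  · simp only [Matrix.trace, Matrix.diag_apply]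
    exact integrable_finsetSum _ fun a _ => hiq a a
  rw [Metric.tendsto_atTop']
  intro ε hε
  have h := main_small f hf k (ε / 2) (half_pos hε)
  obtain ⟨N, hN⟩ := eventually_atTop.1 h
  refine ⟨N, fun n hn => ?_⟩
  have hnpos : (0 : ℝ) < n := by
    have : 0 < n := by omega
    exact_mod_cast this
  have hn0 : (n : ℂ) ≠ 0 := by exact_mod_cast hnpos.ne'
  have h1 := hN n hn.le 1
  rw [Matrix.mul_one, Matrix.trace_sub, trace_bT _ hiq] at h1
  rw [dist_eq_norm]
  set t := (rs (blockToeplitz f n n) ^ k).trace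
  set L := ((2 * π : ℝ) : ℂ)⁻¹ * ∫ θ, (rs (f θ) ^ k).trace ∂muT
  have e : (n : ℂ)⁻¹ * t - L = (n : ℂ)⁻¹ * (t - n * L) := by field_simp
  rw [e, norm_mul, norm_inv, Complex.norm_natCast, inv_mul_lt_iff₀ hnpos]
  have h2 : ‖(1 : Matrix (Fin n × ρ) (Fin n × ρ) ℂ)‖ ≤ 1 := norm_one_le
  calc _ ≤ _ := h1
    _ ≤ ε / 2 * n * 1 := mul_le_mul_of_nonneg_left h2 (by positivity)
    _ < n * ε := by nlinarith

end block

section spec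
open scoped ComplexOrder
variable {m n : Type*} [Fintype m] [Fintype n] [DecidableEq m]

/-- the eigenvalues of `rs A` -/
def yv (A : Matrix m n ℂ) (i : m) : ℝ :=
  (1 + (Matrix.isHermitian_mul_conjTranspose_self A).eigenvalues i)⁻¹

lemma ev_nonneg (A : Matrix m n ℂ) (i : m) :
    0 ≤ (Matrix.isHermitian_mul_conjTranspose_self A).eigenvalues i :=
  (Matrix.posSemidef_self_mul_conjTranspose A).eigenvalues_nonneg i

lemma yv_mem (A : Matrix m n ℂ) (i : m) : yv A i ∈ Set.Icc (0 : ℝ) 1 := by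
  have := ev_nonneg A i
  refine ⟨?_, ?_⟩
  · unfold yv; positivity
  · exact inv_le_one_of_one_le₀ (by linarith)

lemma rs_spec (A : Matrix m n ℂ) : ∃ U : Matrix m m ℂ, Uᴴ * U = 1 ∧ U * Uᴴ = 1 ∧
    rs A = U * Matrix.diagonal (fun i => ((yv A i : ℝ) : ℂ)) * Uᴴ := by
  set hA := Matrix.isHermitian_mul_conjTranspose_self A with hAdef
  have hU := hA.spectral_theorem
  rw [Unitary.conjStarAlgAut_apply] at hU
  set U : Matrix m m ℂ := (hA.eigenvectorUnitary : Matrix m m ℂ) with hUdef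
  have u1 : Uᴴ * U = 1 := Unitary.coe_star_mul_self hA.eigenvectorUnitary
  have u2 : U * Uᴴ = 1 := Unitary.coe_mul_star_self hA.eigenvectorUnitary
  refine ⟨U, u1, u2, ?_⟩
  refine Matrix.inv_eq_right_inv ?_
  have hU' : A * Aᴴ = U * Matrix.diagonal (fun i => ((hA.eigenvalues i : ℝ) : ℂ)) * Uᴴ := hU
  have h1 : 1 + A * Aᴴ = U * Matrix.diagonal (fun i => ((1 + hA.eigenvalues i : ℝ) : ℂ)) * Uᴴ := by
    have : Matrix.diagonal (fun i => ((1 + hA.eigenvalues i : ℝ) : ℂ)) =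
        1 + Matrix.diagonal (fun i => ((hA.eigenvalues i : ℝ) : ℂ)) := by
      rw [← Matrix.diagonal_one, Matrix.diagonal_add]
      simp
    rw [this, Matrix.mul_add, Matrix.add_mul, Matrix.mul_one, u2, ← hU']
  rw [h1]
  have h2 : Matrix.diagonal (fun i => ((1 + hA.eigenvalues i : ℝ) : ℂ)) *
      Matrix.diagonal (fun i => ((yv A i : ℝ) : ℂ)) = 1 := by
    rw [Matrix.diagonal_mul_diagonal, ← Matrix.diagonal_one]
    congr 1
    funext i
    have : (1 + hA.eigenvalues i) ≠ 0 := by have := ev_nonneg A i; positivity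
    rw [← Complex.ofReal_mul, yv, mul_inv_cancel₀ this, Complex.ofReal_one]
  calc _ = U * (Matrix.diagonal (fun i => ((1 + hA.eigenvalues i : ℝ) : ℂ)) * (Uᴴ * U) *
      Matrix.diagonal (fun i => ((yv A i : ℝ) : ℂ))) * Uᴴ := by
        simp only [Matrix.mul_assoc]
    _ = 1 := by rw [u1, Matrix.mul_one, h2, Matrix.mul_one, u2]

lemma rs_trace (A : Matrix m n ℂ) (k : ℕ) :
    (rs A ^ k).trace = ∑ i, ((yv A i : ℝ) : ℂ) ^ k := by
  obtain ⟨U, u1, u2, h⟩ := rs_spec A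
  have hp : rs A ^ k = U * Matrix.diagonal (fun i => ((yv A i : ℝ) : ℂ) ^ k) * Uᴴ := by
    induction k with
    | zero => simp [u2]
    | succ k ih =>
      rw [pow_succ, ih, h]
      calc _ = U * (Matrix.diagonal (fun i => ((yv A i : ℝ) : ℂ) ^ k) * (Uᴴ * U) *
          Matrix.diagonal (fun i => ((yv A i : ℝ) : ℂ))) * Uᴴ := by
            simp only [Matrix.mul_assoc]
        _ = _ := by
            rw [u1, Matrix.mul_one, Matrix.diagonal_mul_diagonal]
            simp only [pow_succ]
  rw [hp, Matrix.trace_mul_comm, ← Matrix.mul_assoc, u1, Matrix.one_mul, Matrix.trace_diagonal]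

lemma poly_sum (A : Matrix m n ℂ) (q : Polynomial ℂ) :
    ∑ i, q.eval ((yv A i : ℝ) : ℂ) = ∑ k ∈ Finset.range (q.natDegree + 1),
      q.coeff k * (rs A ^ k).trace := by
  simp only [Polynomial.eval_eq_sum_range, rs_trace, Finset.mul_sum]
  exact Finset.sum_comm

end spec

lemma exists_poly (g : ℝ → ℂ) (hg : ContinuousOn g (Set.Icc 0 1)) (ε : ℝ) (hε : 0 < ε) :
    ∃ q : Polynomial ℂ, ∀ x ∈ Set.Icc (0 : ℝ) 1, ‖g x - q.eval (x : ℂ)‖ ≤ ε := by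
  obtain ⟨p, hp⟩ := exists_polynomial_near_of_continuousOn 0 1 (fun x => (g x).re)
    (Complex.continuous_re.comp_continuousOn hg) (ε / 2) (half_pos hε)
  obtain ⟨r, hr⟩ := exists_polynomial_near_of_continuousOn 0 1 (fun x => (g x).im)
    (Complex.continuous_im.comp_continuousOn hg) (ε / 2) (half_pos hε)
  refine ⟨p.map Complex.ofRealHom + Polynomial.C Complex.I * r.map Complex.ofRealHom,
    fun x hx => ?_⟩
  have e : ∀ p : Polynomial ℝ, (p.map Complex.ofRealHom).eval (x : ℂ) = ((p.eval x : ℝ) : ℂ) := by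
    intro p
    exact Polynomial.eval_map_apply Complex.ofRealHom x
  rw [Polynomial.eval_add, Polynomial.eval_mul, Polynomial.eval_C, e, e]
  have h1 := hp x hx
  have h2 := hr x hx
  refine (Complex.norm_le_abs_re_add_abs_im _).trans ?_
  simp only [Complex.sub_re, Complex.add_re, Complex.ofReal_re, Complex.mul_re, Complex.I_re,
    Complex.I_im, Complex.ofReal_im, Complex.sub_im, Complex.add_im, Complex.mul_im]
  rw [abs_sub_comm] at h1 h2
  ring_nf at h1 h2 ⊢
  linarith

section block2
variable {ρ τ : Type} [Fintype ρ] [Fintype τ] [DecidableEq ρ] [DecidableEq τ]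

lemma poly_tendsto (f : ℝ → Matrix ρ τ ℂ) (hf : ∀ a b, Integrable (fun θ => f θ a b) muT)
    (q : Polynomial ℂ) :
    Integrable (fun θ => ∑ i, q.eval ((yv (f θ) i : ℝ) : ℂ)) muT ∧
    Tendsto (fun n : ℕ => (n : ℂ)⁻¹ * ∑ i, q.eval ((yv (blockToeplitz f n n) i : ℝ) : ℂ)) atTop
      (𝓝 (((2 * π : ℝ) : ℂ)⁻¹ * ∫ θ, ∑ i, q.eval ((yv (f θ) i : ℝ) : ℂ) ∂muT)) := by
  simp only [poly_sum]
  have hi : ∀ k ∈ Finset.range (q.natDegree + 1),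
      Integrable (fun θ => q.coeff k * (rs (f θ) ^ k).trace) muT := fun k _ =>
    (trace_tendsto f hf k).1.const_mul _
  refine ⟨integrable_finsetSum _ hi, ?_⟩
  rw [integral_finsetSum _ hi]
  simp only [integral_const_mul, Finset.mul_sum]
  refine tendsto_finsetSum _ fun k _ => ?_
  have := (trace_tendsto f hf k).2.const_mul (q.coeff k)
  convert this using 2 <;> ring_nf

lemma sum_approx {m n : Type*} [Fintype m] [Fintype n] [DecidableEq m] (A : Matrix m n ℂ)
    (g h : ℝ → ℂ) (ε : ℝ) (H : ∀ x ∈ Set.Icc (0 : ℝ) 1, ‖g x - h x‖ ≤ ε) :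
    ‖∑ i, g (yv A i) - ∑ i, h (yv A i)‖ ≤ Fintype.card m * ε := by
  rw [← Finset.sum_sub_distrib]
  refine (norm_sum_le _ _).trans ?_
  refine (Finset.sum_le_card_nsmul _ _ ε fun i _ => H _ (yv_mem A i)).trans ?_
  rw [nsmul_eq_mul, Finset.card_univ]

lemma cont_tendsto (f : ℝ → Matrix ρ τ ℂ) (hf : ∀ a b, Integrable (fun θ => f θ a b) muT)
    (g : ℝ → ℂ) (hg : ContinuousOn g (Set.Icc 0 1)) :
    Integrable (fun θ => ∑ i, g (yv (f θ) i)) muT ∧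
    Tendsto (fun n : ℕ => (n : ℂ)⁻¹ * ∑ i, g (yv (blockToeplitz f n n) i)) atTop
      (𝓝 (((2 * π : ℝ) : ℂ)⁻¹ * ∫ θ, ∑ i, g (yv (f θ) i) ∂muT)) := by
  have hpi := Real.pi_pos
  have hintg : Integrable (fun θ => ∑ i, g (yv (f θ) i)) muT := by
    choose q hq using fun k : ℕ => exists_poly g hg (1 / ((k : ℝ) + 1)) (by positivity)
    have hm : AEStronglyMeasurable (fun θ => ∑ i, g (yv (f θ) i)) muT := by
      refine aestronglyMeasurable_of_tendsto_ae atTop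
        (f := fun k θ => ∑ i, (q k).eval ((yv (f θ) i : ℝ) : ℂ))
        (fun k => (poly_tendsto f hf (q k)).1.aestronglyMeasurable)
        (Eventually.of_forall fun θ => ?_)
      refine tendsto_finsetSum _ fun i _ => ?_
      rw [tendsto_iff_norm_sub_tendsto_zero]
      refine squeeze_zero (fun _ => norm_nonneg _) (fun k => ?_)
        tendsto_one_div_add_atTop_nhds_zero_nat
      rw [norm_sub_rev]
      exact hq k _ (yv_mem _ _)
    obtain ⟨C, hC⟩ := isCompact_Icc.exists_bound_of_continuousOn hg
    refine Integrable.of_bound hm (Fintype.card ρ * C) (Eventually.of_forall fun θ => ?_)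
    have := sum_approx (f θ) g 0 C (by simpa using hC)
    simpa using this
  refine ⟨hintg, ?_⟩
  rw [Metric.tendsto_atTop']
  intro ε hε
  set c : ℝ := ((Fintype.card ρ : ℕ) : ℝ) with hc
  have hc0 : 0 ≤ c := by positivity
  set δ : ℝ := ε / (3 * (c + 1)) with hδ
  have hδ0 : 0 < δ := by positivity
  have hcδ : c * δ < ε / 3 := by
    rw [hδ, mul_div_assoc', div_lt_div_iff₀ (by positivity) (by positivity)]
    nlinarith
  obtain ⟨q, hq⟩ := exists_poly g hg δ hδ0
  obtain ⟨qi, qt⟩ := poly_tendsto f hf q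
  obtain ⟨N, hN⟩ := (Metric.tendsto_atTop'.1 qt) (ε / 3) (by positivity)
  refine ⟨N, fun n hn => ?_⟩
  have hnpos : (0 : ℝ) < n := by
    have : 0 < n := by omega
    exact_mod_cast this
  have a1 := hN n hn
  have a2 := sum_approx (blockToeplitz f n n) g (fun x => q.eval (x : ℂ)) δ hq
  rw [Fintype.card_prod, Fintype.card_fin] at a2
  push_cast at a2
  rw [← hc] at a2
  have a3 : ‖(∫ θ, ∑ i, g (yv (f θ) i) ∂muT) - ∫ θ, ∑ i, q.eval ((yv (f θ) i : ℝ) : ℂ) ∂muT‖ ≤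
      c * δ * (2 * π) := by
    rw [← integral_sub hintg qi]
    refine (norm_integral_le_of_norm_le_const (C := c * δ)
      (Eventually.of_forall fun θ => ?_)).trans ?_
    · exact sum_approx (f θ) g (fun x => q.eval (x : ℂ)) δ hq
    · apply le_of_eq
      congr 1
      rw [measureReal_restrict_apply_univ, Real.volume_real_Ioc_of_le (by linarith)]
      ring
  set SG := ∑ i, g (yv (blockToeplitz f n n) i)
  set SQ := ∑ i, q.eval ((yv (blockToeplitz f n n) i : ℝ) : ℂ)
  set IG := ∫ θ, ∑ i, g (yv (f θ) i) ∂muT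
  set IQ := ∫ θ, ∑ i, q.eval ((yv (f θ) i : ℝ) : ℂ) ∂muT
  have b2 : ‖(n : ℂ)⁻¹ * (SG - SQ)‖ ≤ c * δ := by
    rw [norm_mul, norm_inv, Complex.norm_natCast, inv_mul_le_iff₀ hnpos]
    linarith
  have b3 : ‖((2 * π : ℝ) : ℂ)⁻¹ * (IG - IQ)‖ ≤ c * δ := by
    rw [norm_mul, norm_inv, Complex.norm_real, Real.norm_of_nonneg (by positivity),
      inv_mul_le_iff₀ (by positivity)]
    linarith
  rw [dist_eq_norm] at a1 ⊢
  have e : (n : ℂ)⁻¹ * SG - ((2 * π : ℝ) : ℂ)⁻¹ * IG = (n : ℂ)⁻¹ * (SG - SQ) +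
      ((n : ℂ)⁻¹ * SQ - ((2 * π : ℝ) : ℂ)⁻¹ * IQ) - ((2 * π : ℝ) : ℂ)⁻¹ * (IG - IQ) := by ring
  rw [e]
  refine (norm_sub_le _ _).trans_lt ?_
  have := norm_add_le ((n : ℂ)⁻¹ * (SG - SQ)) ((n : ℂ)⁻¹ * SQ - ((2 * π : ℝ) : ℂ)⁻¹ * IQ)
  linarith

end block2

/-- test function in the resolvent variable -/
def gF (F : ℝ → ℂ) (y : ℝ) : ℂ := if y = 0 then 0 else F (Real.sqrt (y⁻¹ - 1))

lemma gF_cont (F : ℝ → ℂ) (hF : Continuous F) (hc : HasCompactSupport F) :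
    ContinuousOn (gF F) (Set.Icc 0 1) := by
  intro y hy
  by_cases h : y = 0
  · subst h
    obtain ⟨M, hM⟩ := hc.isCompact.isBounded.exists_norm_le
    have hz : ∀ x : ℝ, |M| < x → F x = 0 := by
      intro x hx
      by_contra hne
      have := hM x (subset_tsupport F hne)
      rw [Real.norm_eq_abs] at this
      linarith [le_abs_self x, le_abs_self M]
    have : ∀ᶠ y in 𝓝[Set.Icc 0 1] (0 : ℝ), gF F y = 0 := by
      have h1 : ∀ᶠ y in 𝓝[Set.Icc 0 1] (0 : ℝ), y < (M ^ 2 + 2)⁻¹ :=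
        nhdsWithin_le_nhds (Iio_mem_nhds (by positivity))
      filter_upwards [h1, self_mem_nhdsWithin] with y h1 h2
      unfold gF
      split_ifs with h0
      · rfl
      apply hz
      have hy0 : 0 < y := lt_of_le_of_ne h2.1 (Ne.symm h0)
      have : M ^ 2 + 2 < y⁻¹ := (lt_inv_comm₀ hy0 (by positivity)).1 h1
      apply Real.lt_sqrt_of_sq_lt
      rw [sq_abs]
      linarith
    have h0 : gF F 0 = 0 := by simp [gF]
    rw [ContinuousWithinAt, h0]
    exact tendsto_const_nhds.congr' (this.mono fun _ h => h.symm)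
  · have hcont : ContinuousAt (fun y : ℝ => F (Real.sqrt (y⁻¹ - 1))) y := by
      refine hF.continuousAt.comp (Real.continuous_sqrt.continuousAt.comp ?_)
      exact (continuousAt_inv₀ h).sub continuousAt_const
    refine (hcont.congr ?_).continuousWithinAt
    filter_upwards [isOpen_ne.mem_nhds h] with z hz
    simp [gF, hz]

lemma gF_yv {m n : Type*} [Fintype m] [Fintype n] [DecidableEq m] (F : ℝ → ℂ) (A : Matrix m n ℂ)
    (i : m) : gF F (yv A i) =
      F (Real.sqrt ((Matrix.isHermitian_mul_conjTranspose_self A).eigenvalues i)) := by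
  have := ev_nonneg A i
  have h : yv A i ≠ 0 := by unfold yv; positivity
  rw [gF, if_neg h]
  congr 2
  rw [yv, inv_inv]
  ring


/-- Szegő-type singular value distribution for block Toeplitz
matrices: if `f ∈ L¹([-π,π]; ℂ^{s×t})` then `{T_n(f)}_n ∼_σ f`. -/
theorem toeplitz_sv_distribution
    (s t : ℕ) (f : ℝ → Matrix (Fin s) (Fin t) ℂ)
    (hf : ∀ i j, IntervalIntegrable (fun θ => f θ i j) volume (-π) π) :
    DistributedSV (Set.Icc (-π) π) f (fun n => blockToeplitz f n n) := by
  intro F hF hc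
  have hpi := Real.pi_pos
  have hle : -π ≤ π := by linarith
  have hf' : ∀ a b, Integrable (fun θ => f θ a b) muT := fun a b =>
    (intervalIntegrable_iff_integrableOn_Ioc_of_le hle).1 (hf a b)
  obtain ⟨hi, ht⟩ := cont_tendsto f hf' (gF F) (gF_cont F hF hc)
  simp only [gF_yv] at hi ht
  simp only [svSum, Fintype.card_prod, Fintype.card_fin]
  rw [integral_Icc_eq_integral_Ioc, Real.volume_Icc, ENNReal.toReal_ofReal (by linarith)]
  have e1 : ∀ n : ℕ, min (n * s) (n * t) = n * min s t := fun n => (Nat.mul_min_mul_left n s t)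
  simp only [e1, ← Nat.mul_sub]
  set r := min s t
  set d := s - r
  rw [integral_const_mul, integral_sub hi (integrable_const _), integral_const,
    measureReal_restrict_apply_univ, Real.volume_real_Ioc_of_le hle]
  have hlim := ((ht.sub (tendsto_const_nhds (x := (d : ℂ) * F 0))).const_mul (r : ℂ)⁻¹)
  have h2pi : ((2 * π : ℝ) : ℂ) ≠ 0 := by exact_mod_cast (by positivity : (2 * π : ℝ) ≠ 0)
  have e2 : π - -π = 2 * π := by ring
  rw [e2]
  convert hlim.congr' ?_ using 2
  · rw [Complex.real_smul]
    field_simp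
  · filter_upwards [eventually_gt_atTop 0] with n hn
    have hn0 : (n : ℂ) ≠ 0 := by exact_mod_cast hn.ne'
    push_cast
    rw [mul_inv]
    field_simp

end
end
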